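/- arXiv:2509.24598 — 8 statements merged into one kernel-verified Lean document; each statement's English description precedes it below -/
import Mathlib

section
/- Let L be a real N×N matrix, A an n×n real matrix, B an n×m real matrix, K an m×n real matrix, and c > 0 a real number. Suppose L·1 = 0 (the all-ones vector is in the kernel of L) and 0 is a root of multiplicity exactly one of the characteristic polynomial of L over ℂ. Consider the closed-loop system x(k+1) = (I_N ⊗ A − c·L ⊗ (BK)) x(k), where x(k) ∈ ℝ^{Nn} is partitioned into N blocks x_1(k),…,x_N(k) ∈ ℝ^n. Then ‖x_i(k) − x_j(k)‖ → 0 as k → ∞ for all i, j and all initial conditions x(0) if and only if for every nonzero eigenvalue λ ∈ ℂ of L, the complex matrix A − cλ·BK has spectral radius strictly less than 1 (i.e., every eigenvalue of A − cλ·BK lies strictly inside the unit circle). -/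
/-!
Stack the state as a matrix `X` whose columns are the agents' states. The closed loop is then
`X ↦ A X - F X Lᵀ` with `F = c B K`, and it commutes with `X ↦ X Lᵀ`. As the eigenvalue `0` of `L`
is simple with eigenvector `1`, the kernel of `X ↦ X Lᵀ` is the consensus subspace and its range is
an invariant complement. On that range every eigenvalue `z` of the closed loop has a joint
eigenvector `X`, say with `X Lᵀ = λ X` and `λ ≠ 0`: the rows of `X` show that `λ` is an eigenvalue
of `L` and its columns that `z` is one of `A - λ F`, so Schur stability makes the disagreement
decay. Conversely, `w vᵀ` with `L v = λ v` and `(A - λ F) w = z w` is a mode off the consensus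
subspace with multiplier `z`.
-/

open Matrix Kronecker Filter Polynomial

section Operators

theorem tendsto_pow_nhds_zero_of_spectralRadius_lt_one {𝔸 : Type*} [NormedRing 𝔸]
    [NormedAlgebra ℂ 𝔸] [CompleteSpace 𝔸] {a : 𝔸} (ha : spectralRadius ℂ a < 1) :
    Tendsto (fun k : ℕ => a ^ k) atTop (nhds 0) := by
  obtain ⟨q, haq, hq⟩ := ENNReal.lt_iff_exists_nnreal_btwn.1 ha
  have hbound : ∀ᶠ k : ℕ in atTop, ‖a ^ k‖ ≤ (q : ℝ) ^ k := by
    filter_upwards [(spectrum.gelfand_formula a).eventually_lt_const haq, eventually_gt_atTop 0]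
      with k hk hk0
    have hle := (ENNReal.rpow_inv_le_iff (by positivity)).1 (one_div (k : ℝ) ▸ hk.le)
    rw [ENNReal.rpow_natCast] at hle
    exact_mod_cast hle
  exact squeeze_zero_norm' hbound
    (tendsto_pow_atTop_nhds_zero_of_lt_one q.2 (by exact_mod_cast hq))

theorem exists_common_hasEigenvector {𝕜 V : Type*} [Field 𝕜] [IsAlgClosed 𝕜] [AddCommGroup V]
    [Module 𝕜 V] [FiniteDimensional 𝕜 V] {S T : Module.End 𝕜 V} (hST : Commute S T) {z : 𝕜}
    (hz : S.HasEigenvalue z) : ∃ l v, S.HasEigenvector z v ∧ T.HasEigenvector l v := by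
  have hmaps : ∀ v ∈ S.eigenspace z, T v ∈ S.eigenspace z :=
    Module.End.mapsTo_genEigenspace_of_comm hST z 1
  have : Nontrivial (S.eigenspace z) := (S.eigenspace z).nontrivial_iff_ne_bot.2 hz
  obtain ⟨l, hl⟩ := Module.End.exists_eigenvalue (T.restrict hmaps)
  obtain ⟨v, hv⟩ := hl.exists_hasEigenvector
  have hv0 : (v : V) ≠ 0 := Subtype.coe_ne_coe.2 hv.2
  exact ⟨l, v, ⟨v.2, hv0⟩,
    Module.End.mem_eigenspace_iff.2 (congrArg Subtype.val hv.apply_eq_smul), hv0⟩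

theorem maxGenEigenspace_eq_span_singleton {𝕜 V : Type*} [Field 𝕜] [AddCommGroup V] [Module 𝕜 V]
    [FiniteDimensional 𝕜 V] {T : Module.End 𝕜 V} {z : 𝕜} {v : V} (hv : T.HasEigenvector z v)
    (hz : T.charpoly.rootMultiplicity z = 1) : T.maxGenEigenspace z = Submodule.span 𝕜 {v} := by
  refine (Submodule.eq_of_le_of_finrank_eq ?_ ?_).symm
  · rw [Submodule.span_singleton_le_iff_mem]
    exact T.genEigenspace_le_maximal z 1 hv.1
  · rw [finrank_span_singleton hv.2, LinearMap.finrank_maxGenEigenspace_eq, hz]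

variable {V : Type*} [NormedAddCommGroup V] [NormedSpace ℂ V] [FiniteDimensional ℂ V]

theorem tendsto_pow_apply_of_forall_hasEigenvalue {T : Module.End ℂ V}
    (hT : ∀ z, T.HasEigenvalue z → ‖z‖ < 1) (v : V) :
    Tendsto (fun k => (T ^ k) v) atTop (nhds 0) := by
  cases subsingleton_or_nontrivial V
  · simpa only [Subsingleton.elim _ (0 : V)] using tendsto_const_nhds
  have : CompleteSpace V := FiniteDimensional.complete ℂ V
  let e := Module.End.toContinuousLinearMap (𝕜 := ℂ) V
  have hradius : spectralRadius ℂ (e T) < 1 := by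
    refine spectrum.spectralRadius_lt_of_forall_lt (r := 1) _ fun z hz => ?_
    rw [AlgEquiv.spectrum_eq, ← Module.End.hasEigenvalue_iff_mem_spectrum] at hz
    exact hT z hz
  have heval := ((ContinuousLinearMap.apply ℂ V v).continuous.tendsto _).comp
    (tendsto_pow_nhds_zero_of_spectralRadius_lt_one hradius)
  rw [map_zero] at heval
  exact heval.congr fun k => by simp only [Function.comp_apply, ← map_pow]; rfl

variable {T P : Module.End ℂ V}

theorem tendsto_pow_apply_of_mem_range (hTP : Commute T P)
    (hP : Disjoint (LinearMap.ker P) (LinearMap.range P))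
    (hstable : ∀ z l v, T.HasEigenvector z v → P.HasEigenvector l v → l ≠ 0 → ‖z‖ < 1)
    {v : V} (hv : v ∈ LinearMap.range P) : Tendsto (fun k => (T ^ k) v) atTop (nhds 0) := by
  have hTrange : ∀ w ∈ LinearMap.range P, T w ∈ LinearMap.range P := by
    rintro _ ⟨w, rfl⟩
    exact ⟨T w, (LinearMap.congr_fun hTP.eq w).symm⟩
  have hPrange : ∀ w ∈ LinearMap.range P, P w ∈ LinearMap.range P :=
    fun w _ => LinearMap.mem_range_self P w
  have hcomm : Commute (T.restrict hTrange) (P.restrict hPrange) :=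
    LinearMap.ext fun w => Subtype.ext (LinearMap.congr_fun hTP.eq (w : V))
  have hrestrict := tendsto_pow_apply_of_forall_hasEigenvalue (T := T.restrict hTrange) (by
    intro z hz
    obtain ⟨l, w, hTw, hPw⟩ := exists_common_hasEigenvector hcomm hz
    have hw0 : (w : V) ≠ 0 := Subtype.coe_ne_coe.2 hTw.2
    have hTw' : T w = z • (w : V) := congrArg Subtype.val hTw.apply_eq_smul
    have hPw' : P w = l • (w : V) := congrArg Subtype.val hPw.apply_eq_smul
    refine hstable z l w ⟨Module.End.mem_eigenspace_iff.2 hTw', hw0⟩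
      ⟨Module.End.mem_eigenspace_iff.2 hPw', hw0⟩ ?_
    rintro rfl
    exact hw0 (Submodule.disjoint_def.1 hP w (by simpa using hPw') w.2)) ⟨v, hv⟩
  refine ((continuous_subtype_val.tendsto _).comp hrestrict).congr fun k => ?_
  rw [Function.comp_apply, Module.End.pow_restrict, LinearMap.coe_restrict_apply]

theorem tendsto_apply_pow_of_ker_le_ker {W : Type*} [NormedAddCommGroup W] [NormedSpace ℂ W]
    {D : V →ₗ[ℂ] W} (hTP : Commute T P) (hP : Disjoint (LinearMap.ker P) (LinearMap.range P))
    (hD : LinearMap.ker P ≤ LinearMap.ker D)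
    (hstable : ∀ z l v, T.HasEigenvector z v → P.HasEigenvector l v → l ≠ 0 → ‖z‖ < 1) (v : V) :
    Tendsto (fun k => D ((T ^ k) v)) atTop (nhds 0) := by
  have hsup : LinearMap.ker P ⊔ LinearMap.range P = ⊤ :=
    Submodule.eq_top_of_disjoint _ _ (by rw [add_comm, P.finrank_range_add_finrank_ker]) hP
  obtain ⟨u, hu, w, hw, rfl⟩ := Submodule.mem_sup.1 (hsup ▸ Submodule.mem_top (x := v))
  have hker : ∀ k, D ((T ^ k) u) = 0 := fun k => hD <| by
    rw [LinearMap.mem_ker] at hu ⊢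
    rw [← Module.End.mul_apply, ← (hTP.pow_left k).eq, Module.End.mul_apply, hu, map_zero]
  have hrange := (D.continuous_of_finiteDimensional.tendsto 0).comp
    (tendsto_pow_apply_of_mem_range hTP hP hstable hw)
  simpa only [map_add, hker, zero_add, map_zero, Function.comp_def] using hrange

end Operators

section Matrices

variable {ι 𝕜 : Type*} [Fintype ι] [Field 𝕜]

theorem exists_apply_ne_of_mulVec_eq_smul {L : Matrix ι ι 𝕜} (hL1 : L *ᵥ 1 = 0) {l : 𝕜}
    (hl : l ≠ 0) {v : ι → 𝕜} (hv : L *ᵥ v = l • v) (hv0 : v ≠ 0) : ∃ i j, v i ≠ v j := by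
  by_contra! hconst
  obtain ⟨i, -⟩ := Function.ne_iff.1 hv0
  have hv1 : v = v i • 1 := funext fun j => by simp [hconst j i]
  have hLv : L *ᵥ v = 0 := by rw [hv1, mulVec_smul, hL1, smul_zero]
  exact smul_ne_zero hl hv0 (hv ▸ hLv)

variable [DecidableEq ι]

theorem hasEigenvector_toLin'_iff {M : Matrix ι ι 𝕜} {z : 𝕜} {v : ι → 𝕜} :
    Module.End.HasEigenvector (toLin' M) z v ↔ M *ᵥ v = z • v ∧ v ≠ 0 := by
  rw [Module.End.hasEigenvector_iff, Module.End.mem_eigenspace_iff, toLin'_apply]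

theorem isRoot_charpoly_iff_exists_mulVec_eq_smul {M : Matrix ι ι 𝕜} {z : 𝕜} :
    M.charpoly.IsRoot z ↔ ∃ v, M *ᵥ v = z • v ∧ v ≠ 0 := by
  simp_rw [← charpoly_toLin', ← Module.End.hasEigenvalue_iff_isRoot_charpoly,
    ← hasEigenvector_toLin'_iff]
  exact ⟨fun h => h.exists_hasEigenvector,
    fun ⟨_, hv⟩ => Module.End.hasEigenvalue_of_hasEigenvector hv⟩

theorem mem_span_one_of_mulVec_mulVec_eq_zero {L : Matrix ι ι 𝕜} (hL1 : L *ᵥ 1 = 0)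
    (hL : L.charpoly.rootMultiplicity 0 = 1) {v : ι → 𝕜} (hv : L *ᵥ (L *ᵥ v) = 0) :
    v ∈ Submodule.span 𝕜 {(1 : ι → 𝕜)} := by
  cases isEmpty_or_nonempty ι
  · exact Subsingleton.elim 0 v ▸ zero_mem _
  have hone : Module.End.HasEigenvector (toLin' L) 0 1 :=
    hasEigenvector_toLin'_iff.2 ⟨by rw [hL1, zero_smul], one_ne_zero⟩
  rw [← charpoly_toLin'] at hL
  rw [← maxGenEigenspace_eq_span_singleton hone hL, Module.End.mem_maxGenEigenspace]
  exact ⟨2, by simpa [pow_two] using hv⟩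

theorem mulVec_eq_zero_of_mulVec_mulVec_eq_zero {L : Matrix ι ι 𝕜} (hL1 : L *ᵥ 1 = 0)
    (hL : L.charpoly.rootMultiplicity 0 = 1) {v : ι → 𝕜} (hv : L *ᵥ (L *ᵥ v) = 0) :
    L *ᵥ v = 0 := by
  obtain ⟨t, rfl⟩ :=
    Submodule.mem_span_singleton.1 (mem_span_one_of_mulVec_mulVec_eq_zero hL1 hL hv)
  rw [mulVec_smul, hL1, smul_zero]

theorem apply_eq_apply_of_mulVec_eq_zero {L : Matrix ι ι 𝕜} (hL1 : L *ᵥ 1 = 0)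
    (hL : L.charpoly.rootMultiplicity 0 = 1) {v : ι → 𝕜} (hv : L *ᵥ v = 0) (i j : ι) :
    v i = v j := by
  obtain ⟨t, rfl⟩ := Submodule.mem_span_singleton.1
    (mem_span_one_of_mulVec_mulVec_eq_zero hL1 hL (by rw [hv, mulVec_zero]))
  rfl

end Matrices

section Consensus

/-- Consensus of the linear system `x (k + 1) = M x k`: along every trajectory the states
`x k (i, ·)` and `x k (j, ·)` of any two agents approach each other. -/
def ReachesConsensus {ι κ R : Type*} [Fintype ι] [Fintype κ] [NormedRing R]
    (M : Matrix (ι × κ) (ι × κ) R) : Prop :=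
  ∀ x : ℕ → ι × κ → R, (∀ k, x (k + 1) = M *ᵥ x k) →
    ∀ i j, Tendsto (fun k => ‖fun p => x k (i, p) - x k (j, p)‖) atTop (nhds 0)

namespace ReachesConsensus

variable {ι κ R S : Type*} [Fintype ι] [Fintype κ] [NormedRing R] [NormedRing S]

theorem iff_tendsto_pow_mulVec [DecidableEq ι] [DecidableEq κ]
    {M : Matrix (ι × κ) (ι × κ) R} : ReachesConsensus M ↔ ∀ x i j p,
      Tendsto (fun k => (M ^ k *ᵥ x) (i, p) - (M ^ k *ᵥ x) (j, p)) atTop (nhds 0) := by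
  simp only [ReachesConsensus, ← tendsto_zero_iff_norm_tendsto_zero, tendsto_pi_nhds,
    Pi.zero_apply]
  constructor
  · intro h x
    exact h (fun k => M ^ k *ᵥ x) fun k => by rw [mulVec_mulVec, pow_succ']
  · intro h x hx
    have hpow : ∀ k, x k = M ^ k *ᵥ x 0 := by
      intro k
      induction k with
      | zero => rw [pow_zero, one_mulVec]
      | succ k ih => rw [hx, ih, mulVec_mulVec, pow_succ']
    simpa only [← hpow] using h (x 0)

theorem iff_tendsto_pow_apply [DecidableEq ι] [DecidableEq κ]
    {M : Matrix (ι × κ) (ι × κ) R} : ReachesConsensus M ↔ ∀ i j p q,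
      Tendsto (fun k => (M ^ k) (i, p) q - (M ^ k) (j, p) q) atTop (nhds 0) := by
  rw [iff_tendsto_pow_mulVec]
  constructor
  · intro h i j p q
    simpa using h (Pi.single q 1) i j p
  · intro h x i j p
    have hsum := tendsto_finsetSum Finset.univ fun q _ => (h i j p q).mul_const (x q)
    simpa [mulVec, dotProduct, sub_mul] using hsum

theorem map_iff {M : Matrix (ι × κ) (ι × κ) R} (φ : R →+* S) (hφ : Isometry φ) :
    ReachesConsensus (M.map φ) ↔ ReachesConsensus M := by
  classical
  have hpow : ∀ k, (M.map φ) ^ k = (M ^ k).map φ := fun k => (map_pow φ.mapMatrix M k).symm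
  simp only [iff_tendsto_pow_apply, hpow, map_apply, ← map_sub]
  simp only [← map_zero φ, hφ.isEmbedding.tendsto_nhds_iff, Function.comp_def]

theorem norm_lt_one_of_mulVec_eq_smul {𝕜 : Type*} [NormedField 𝕜]
    {M : Matrix (ι × κ) (ι × κ) 𝕜} (hM : ReachesConsensus M) {z : 𝕜} {x : ι × κ → 𝕜}
    (hx : M *ᵥ x = z • x) {i j : ι} {p : κ} (hij : x (i, p) ≠ x (j, p)) : ‖z‖ < 1 := by
  classical
  have hpow : ∀ k, M ^ k *ᵥ x = z ^ k • x := by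
    intro k
    induction k with
    | zero => simp
    | succ k ih => rw [pow_succ', ← mulVec_mulVec, ih, mulVec_smul, hx, smul_smul, pow_succ]
  have hdiff := iff_tendsto_pow_mulVec.1 hM x i j p
  simp only [hpow, Pi.smul_apply, smul_eq_mul, ← mul_sub] at hdiff
  have hzpow := hdiff.mul_const (x (i, p) - x (j, p))⁻¹
  simp only [mul_inv_cancel_right₀ (sub_ne_zero.2 hij), zero_mul] at hzpow
  exact tendsto_pow_atTop_nhds_zero_iff_norm_lt_one.1 hzpow

end ReachesConsensus

end Consensus

section ClosedLoop

/-- Schur stability of a complex matrix: its spectrum lies in the open unit disc. -/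
def IsSchurStable {κ : Type*} [Fintype κ] [DecidableEq κ] (M : Matrix κ κ ℂ) : Prop :=
  ∀ z, M.charpoly.IsRoot z → ‖z‖ < 1

/-- The closed-loop matrix of agents with dynamics `A` that are coupled through the Laplacian `L`
by the feedback matrix `F`, which is `c B K` in the paper's notation. -/
def closedLoopMatrix {ι κ R : Type*} [DecidableEq ι] [Ring R] (L : Matrix ι ι R)
    (A F : Matrix κ κ R) : Matrix (ι × κ) (ι × κ) R :=
  (1 : Matrix ι ι R) ⊗ₖ A - L ⊗ₖ F

namespace closedLoopMatrix

theorem map {ι κ R S : Type*} [DecidableEq ι] [Ring R] [Ring S] (φ : R →+* S)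
    (L : Matrix ι ι R) (A F : Matrix κ κ R) :
    (closedLoopMatrix L A F).map φ = closedLoopMatrix (L.map φ) (A.map φ) (F.map φ) := by
  ext ⟨i, p⟩ ⟨j, q⟩
  simp [closedLoopMatrix, one_apply, apply_ite φ]

variable {ι κ R : Type*} [Fintype ι] [DecidableEq ι] [Fintype κ] [CommRing R]
  (L : Matrix ι ι R) (A F : Matrix κ κ R)

theorem mulVec_vec (X : Matrix κ ι R) :
    closedLoopMatrix L A F *ᵥ vec X = vec (A * X - F * X * Lᵀ) := by
  rw [closedLoopMatrix, sub_mulVec, kronecker_mulVec_vec, kronecker_mulVec_vec, transpose_one,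
    Matrix.mul_one, vec_sub]

variable {L} in
theorem mulVec_vec_of_mul_transpose_eq_smul {X : Matrix κ ι R} {l : R} (hX : X * Lᵀ = l • X) :
    closedLoopMatrix L A F *ᵥ vec X = vec ((A - l • F) * X) := by
  rw [mulVec_vec, Matrix.mul_assoc, hX, Matrix.sub_mul, Matrix.mul_smul, Matrix.smul_mul]

theorem commute_kronecker_one [DecidableEq κ] :
    Commute (closedLoopMatrix L A F) (L ⊗ₖ (1 : Matrix κ κ R)) := by
  simp [commute_iff_eq, closedLoopMatrix, sub_mul, mul_sub, ← mul_kronecker_mul]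

end closedLoopMatrix

variable {ι κ : Type*} [Fintype ι] [DecidableEq ι] [Fintype κ] [DecidableEq κ]

theorem disjoint_ker_range_kronecker_one {𝕜 : Type*} [Field 𝕜] {L : Matrix ι ι 𝕜}
    (hL1 : L *ᵥ 1 = 0) (hL : L.charpoly.rootMultiplicity 0 = 1) :
    Disjoint (LinearMap.ker (toLin' (L ⊗ₖ (1 : Matrix κ κ 𝕜))))
      (LinearMap.range (toLin' (L ⊗ₖ (1 : Matrix κ κ 𝕜)))) := by
  rw [Submodule.disjoint_def]
  rintro _ hker ⟨y, rfl⟩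
  obtain ⟨X, rfl⟩ := vec_bijective.surjective y
  simp only [LinearMap.mem_ker, toLin'_apply, kronecker_mulVec_vec, Matrix.one_mul,
    vec_eq_zero_iff] at hker ⊢
  ext p i
  have hrow := congrFun hker p
  simp only [mul_apply_eq_vecMul, vecMul_transpose] at hrow ⊢
  exact congrFun (mulVec_eq_zero_of_mulVec_mulVec_eq_zero hL1 hL hrow) i

theorem apply_eq_apply_of_kronecker_one_mulVec_eq_zero {𝕜 : Type*} [Field 𝕜] {L : Matrix ι ι 𝕜}
    (hL1 : L *ᵥ 1 = 0) (hL : L.charpoly.rootMultiplicity 0 = 1) {x : ι × κ → 𝕜}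
    (hx : (L ⊗ₖ (1 : Matrix κ κ 𝕜)) *ᵥ x = 0) (i j : ι) (p : κ) : x (i, p) = x (j, p) := by
  obtain ⟨X, rfl⟩ := vec_bijective.surjective x
  rw [kronecker_mulVec_vec, Matrix.one_mul, vec_eq_zero_iff] at hx
  have hrow := congrFun hx p
  rw [mul_apply_eq_vecMul, vecMul_transpose] at hrow
  exact apply_eq_apply_of_mulVec_eq_zero hL1 hL hrow i j

theorem isRoot_charpoly_of_common_eigenvector {𝕜 : Type*} [Field 𝕜] {L : Matrix ι ι 𝕜}
    {A F : Matrix κ κ 𝕜} {z l : 𝕜} {x : ι × κ → 𝕜} (hx : x ≠ 0)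
    (hz : closedLoopMatrix L A F *ᵥ x = z • x) (hl : (L ⊗ₖ (1 : Matrix κ κ 𝕜)) *ᵥ x = l • x) :
    L.charpoly.IsRoot l ∧ (A - l • F).charpoly.IsRoot z := by
  obtain ⟨X, rfl⟩ := vec_bijective.surjective x
  obtain ⟨⟨i, p⟩, hip⟩ := Function.ne_iff.1 hx
  rw [kronecker_mulVec_vec, Matrix.one_mul, ← vec_smul, vec_inj] at hl
  rw [closedLoopMatrix.mulVec_vec_of_mul_transpose_eq_smul A F hl, ← vec_smul, vec_inj] at hz
  constructor
  · refine isRoot_charpoly_iff_exists_mulVec_eq_smul.2 ⟨X p, ?_, fun h => hip (congrFun h i)⟩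
    rw [← vecMul_transpose, ← mul_apply_eq_vecMul, hl]
    rfl
  · refine isRoot_charpoly_iff_exists_mulVec_eq_smul.2
      ⟨X.col i, ?_, fun h => hip (congrFun h p)⟩
    exact congrArg (fun Y => Y.col i) hz

theorem norm_lt_one_of_reachesConsensus {𝕜 : Type*} [NormedField 𝕜] {L : Matrix ι ι 𝕜}
    {A F : Matrix κ κ 𝕜} (hL1 : L *ᵥ 1 = 0) (hM : ReachesConsensus (closedLoopMatrix L A F))
    {l z : 𝕜} (hl : L.charpoly.IsRoot l) (hl0 : l ≠ 0) (hz : (A - l • F).charpoly.IsRoot z) :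
    ‖z‖ < 1 := by
  obtain ⟨v, hv, hv0⟩ := isRoot_charpoly_iff_exists_mulVec_eq_smul.1 hl
  obtain ⟨w, hw, hw0⟩ := isRoot_charpoly_iff_exists_mulVec_eq_smul.1 hz
  obtain ⟨i, j, hij⟩ := exists_apply_ne_of_mulVec_eq_smul hL1 hl0 hv hv0
  obtain ⟨p, hp⟩ := Function.ne_iff.1 hw0
  have hX : vecMulVec w v * Lᵀ = l • vecMulVec w v := by
    rw [vecMulVec_mul, vecMul_transpose, hv, vecMulVec_smul]
  refine hM.norm_lt_one_of_mulVec_eq_smul (x := vec (vecMulVec w v)) (i := i) (j := j) (p := p)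
    ?_ fun h => hij (mul_left_cancel₀ hp h)
  rw [closedLoopMatrix.mulVec_vec_of_mul_transpose_eq_smul A F hX, mul_vecMulVec, hw,
    smul_vecMulVec, vec_smul]

theorem reachesConsensus_of_isSchurStable {L : Matrix ι ι ℂ} {A F : Matrix κ κ ℂ}
    (hL1 : L *ᵥ 1 = 0) (hL : L.charpoly.rootMultiplicity 0 = 1)
    (hstable : ∀ l, L.charpoly.IsRoot l → l ≠ 0 → IsSchurStable (A - l • F)) :
    ReachesConsensus (closedLoopMatrix L A F) := by
  rw [ReachesConsensus.iff_tendsto_pow_mulVec]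
  intro x i j p
  let D : Module.Dual ℂ (ι × κ → ℂ) :=
    LinearMap.proj (R := ℂ) (φ := fun _ => ℂ) (i, p) - LinearMap.proj (j, p)
  have hcomm : Commute (toLin' (closedLoopMatrix L A F)) (toLin' (L ⊗ₖ (1 : Matrix κ κ ℂ))) :=
    (closedLoopMatrix.commute_kronecker_one L A F).map toLinAlgEquiv'
  have hD : LinearMap.ker (toLin' (L ⊗ₖ (1 : Matrix κ κ ℂ))) ≤ LinearMap.ker D := fun y hy =>
    sub_eq_zero.2 (apply_eq_apply_of_kronecker_one_mulVec_eq_zero hL1 hL hy i j p)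
  have hdecay := tendsto_apply_pow_of_ker_le_ker hcomm (disjoint_ker_range_kronecker_one hL1 hL) hD
    (fun z l y hz hl hl0 => by
      rw [hasEigenvector_toLin'_iff] at hz hl
      obtain ⟨hroot, hroot'⟩ := isRoot_charpoly_of_common_eigenvector hz.2 hz.1 hl.1
      exact hstable l hroot hl0 z hroot') x
  simpa only [← toLin'_pow, toLin'_apply] using! hdecay

theorem consensus_iff_schur_general {R : Type*} [NormedRing R] (φ : R →+* ℂ) (hφ : Isometry φ)
    {L : Matrix ι ι R} {A F : Matrix κ κ R} (hL1 : L *ᵥ 1 = 0)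
    (hL : (L.map φ).charpoly.rootMultiplicity 0 = 1) :
    ReachesConsensus (closedLoopMatrix L A F) ↔
      ∀ l, (L.map φ).charpoly.IsRoot l → l ≠ 0 → IsSchurStable (A.map φ - l • F.map φ) := by
  have hφL1 : L.map φ *ᵥ 1 = 0 := by
    ext i
    simpa [hL1, Function.comp_def] using! (φ.map_mulVec L 1 i).symm
  rw [← ReachesConsensus.map_iff φ hφ, closedLoopMatrix.map]
  exact ⟨fun hM _ hl hl0 _ hz => norm_lt_one_of_reachesConsensus hφL1 hM hl hl0 hz,
    reachesConsensus_of_isSchurStable hφL1 hL⟩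

end ClosedLoop

/-- Lemma 1 (dynamic consensus criterion): the closed-loop multi-agent system
`x(k+1) = (I_N ⊗ A − c·L ⊗ (BK)) x(k)` reaches state consensus for every initial
condition iff for every nonzero eigenvalue `λ` of `L`, the matrix `A − cλ·BK`
is Schur stable. -/
theorem consensus_iff_schur (N n m : ℕ)
    (L : Matrix (Fin N) (Fin N) ℝ)
    (A : Matrix (Fin n) (Fin n) ℝ) (B : Matrix (Fin n) (Fin m) ℝ)
    (K : Matrix (Fin m) (Fin n) ℝ) (c : ℝ) (hc : 0 < c)
    (hL1 : L.mulVec (fun _ => (1 : ℝ)) = 0)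
    (hmult : ((L.map (Complex.ofReal ·)).charpoly).rootMultiplicity 0 = 1) :
    (∀ x : ℕ → (Fin N × Fin n → ℝ),
        (∀ k, x (k + 1) =
          ((1 : Matrix (Fin N) (Fin N) ℝ) ⊗ₖ A - c • (L ⊗ₖ (B * K))).mulVec (x k)) →
        ∀ i j : Fin N,
          Tendsto (fun k => ‖(fun p => x k (i, p) - x k (j, p) : Fin n → ℝ)‖)
            atTop (nhds 0)) ↔
      (∀ lam : ℂ, ((L.map (Complex.ofReal ·)).charpoly).IsRoot lam → lam ≠ 0 →
        ∀ z : ℂ,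
          ((A.map (Complex.ofReal ·) - ((c : ℂ) * lam) •
              (B.map (Complex.ofReal ·) * K.map (Complex.ofReal ·))).charpoly).IsRoot z →
          ‖z‖ < 1) := by
  have hF : (c • (B * K)).map Complex.ofRealHom =
      (c : ℂ) • (B.map Complex.ofRealHom * K.map Complex.ofRealHom) := by
    rw [Matrix.map_smul' _ _ _ (map_mul _), Matrix.map_mul]
    rfl
  have h := consensus_iff_schur_general Complex.ofRealHom Complex.isometry_ofReal (A := A)
    (F := c • (B * K)) hL1 hmult
  simpa only [closedLoopMatrix, kronecker_smul, hF, smul_smul, mul_comm] using! h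
end

section
/- Let L be a real N×N matrix, A an n×n real matrix, B an n×m real matrix, K an m×n real matrix, and c ∈ ℝ. Then the spectrum (set of eigenvalues over ℂ) of the Nn×Nn complex matrix I_N ⊗ A − c·L ⊗ (BK) equals the union, over all eigenvalues λ ∈ ℂ of L, of the spectra of the complex matrices A − cλ·BK. -/
open Matrix Kronecker Polynomial

/-!
Up to swapping the tensor factors, `1 ⊗ A + L ⊗ P` is a block matrix whose blocks
`aᵢⱼ + pᵢⱼ L` are polynomials in `L` and hence commute. By Silvester's theorem its determinant is
`det q(L)`, where `q(X) = det (A + X P)`, and this is the product of the values of `q` at the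
eigenvalues of `L`. Over `R[X]`, with the characteristic matrix of `A` in place of `A`, this
factors the characteristic polynomial of `1 ⊗ A - L ⊗ P`.
-/

section

variable {R ι κ : Type*} [CommRing R] [Fintype ι] [DecidableEq ι] [Fintype κ] [DecidableEq κ]

theorem det_one_kronecker_add_kronecker_eq_det_aeval (L : Matrix ι ι R) (A P : Matrix κ κ R) :
    ((1 : Matrix ι ι R) ⊗ₖ A + L ⊗ₖ P).det =
      (aeval L (A.map C + (X : R[X]) • P.map C).det).det := by
  have blocks : (1 : Matrix ι ι R) ⊗ₖ A + L ⊗ₖ P =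
      (((A.map C + (X : R[X]) • P.map C).map (aeval L : R[X] →ₐ[R] Matrix ι ι R)).comp
        κ κ ι ι R).submatrix (Equiv.prodComm ι κ) (Equiv.prodComm ι κ) := by
    ext ⟨i, k⟩ ⟨j, l⟩
    simp [algebraMap_matrix_apply, one_apply, mul_comm (L i j), ← Algebra.smul_def]
  rw [blocks, det_submatrix_equiv_self]
  exact (det_det _ (aeval L : R[X] →ₐ[R] Matrix ι ι R).toRingHom).symm

theorem eval_det_map_C_add_X_smul_map_C (A P : Matrix κ κ R) (r : R) :
    (A.map C + (X : R[X]) • P.map C).det.eval r = (A + r • P).det := by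
  rw [← coe_evalRingHom, RingHom.map_det]
  congr 1
  ext i j
  simpa using mul_comm _ _

theorem charmatrix_one_kronecker_sub_kronecker (L : Matrix ι ι R) (A P : Matrix κ κ R) :
    ((1 : Matrix ι ι R) ⊗ₖ A - L ⊗ₖ P).charmatrix =
      (1 : Matrix ι ι R[X]) ⊗ₖ A.charmatrix + L.map C ⊗ₖ P.map C := by
  ext1 ⟨i, k⟩ ⟨j, l⟩
  by_cases hij : i = j <;> by_cases hkl : k = l <;>
    simp [charmatrix, hij, hkl, sub_add, neg_add_eq_sub]

theorem charmatrix_sub_smul (A P : Matrix κ κ R) (r : R) :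
    (A - r • P).charmatrix = A.charmatrix + C r • P.map C := by
  ext1 i j
  simp [charmatrix, sub_add]

variable [IsDomain R]

theorem det_add_algebraMap_eq_prod_roots_charpoly_of_splits {L : Matrix ι ι R}
    (hL : L.charpoly.Splits) (a : R) :
    (L + algebraMap R _ a).det = (L.charpoly.roots.map (· + a)).prod := by
  have card_roots : L.charpoly.roots.card = Fintype.card ι := by
    rw [← hL.natDegree_eq_card_roots, charpoly_natDegree_eq_dim]
  calc (L + algebraMap R _ a).det
      = (-1) ^ Fintype.card ι * L.charpoly.eval (-a) := by
        rw [eval_charpoly, ← det_neg, neg_sub, map_neg, sub_neg_eq_add]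
        rfl
    _ = (L.charpoly.roots.map (· + a)).prod := by
        rw [hL.eval_eq_prod_roots_of_monic L.charpoly_monic, ← card_roots,
          ← Multiset.card_map (-a - ·), ← Multiset.prod_map_neg, Multiset.map_map]
        simp [add_comm]

theorem det_aeval_eq_prod_roots_charpoly_of_splits_of_splits {L : Matrix ι ι R}
    (hL : L.charpoly.Splits) {p : R[X]} (hp : p.Splits) :
    (aeval L p).det = (L.charpoly.roots.map p.eval).prod := by
  induction hp using Submonoid.closure_induction with
  | mem p hp =>
    obtain ⟨a, rfl⟩ | ⟨a, rfl⟩ := hp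
    · simp [algebraMap_eq_diagonal, ← hL.natDegree_eq_card_roots, charpoly_natDegree_eq_dim]
    · simpa using det_add_algebraMap_eq_prod_roots_charpoly_of_splits hL a
  | one => simp
  | mul p q _ _ hp hq => simp [hp, hq, Multiset.prod_map_mul]

theorem det_aeval_eq_prod_roots_charpoly_of_splits {L : Matrix ι ι R}
    (hL : L.charpoly.Splits) (p : R[X]) :
    (aeval L p).det = (L.charpoly.roots.map p.eval).prod := by
  let φ : R →+* AlgebraicClosure (FractionRing R) :=
    (algebraMap (FractionRing R) _).comp (algebraMap R _)
  have hφ : Function.Injective φ :=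
    (algebraMap (FractionRing R) _).injective.comp (IsFractionRing.injective R _)
  have aeval_map : φ.mapMatrix (aeval L p) = aeval (φ.mapMatrix L) (p.map φ) :=
    map_aeval_eq_aeval_map (by ext; simp [algebraMap_matrix_apply, apply_ite φ]) p L
  apply hφ
  calc φ (aeval L p).det
      = (aeval (φ.mapMatrix L) (p.map φ)).det := by rw [RingHom.map_det, aeval_map]
    _ = ((φ.mapMatrix L).charpoly.roots.map (p.map φ).eval).prod :=
        det_aeval_eq_prod_roots_charpoly_of_splits_of_splits (IsAlgClosed.splits _)
          (IsAlgClosed.splits _)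
    _ = φ (L.charpoly.roots.map p.eval).prod := by
        rw [RingHom.mapMatrix_apply, charpoly_map, hL.roots_map_of_injective hφ, map_multiset_prod,
          Multiset.map_map, Multiset.map_map]
        simp [eval_map_apply]

theorem det_one_kronecker_add_kronecker_eq_prod_of_splits {L : Matrix ι ι R}
    (hL : L.charpoly.Splits) (A P : Matrix κ κ R) :
    ((1 : Matrix ι ι R) ⊗ₖ A + L ⊗ₖ P).det =
      (L.charpoly.roots.map fun l ↦ (A + l • P).det).prod := by
  simp only [det_one_kronecker_add_kronecker_eq_det_aeval,
    det_aeval_eq_prod_roots_charpoly_of_splits hL, eval_det_map_C_add_X_smul_map_C]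

theorem charpoly_one_kronecker_sub_kronecker_eq_prod_of_splits {L : Matrix ι ι R}
    (hL : L.charpoly.Splits) (A P : Matrix κ κ R) :
    ((1 : Matrix ι ι R) ⊗ₖ A - L ⊗ₖ P).charpoly =
      (L.charpoly.roots.map fun l ↦ (A - l • P).charpoly).prod := by
  have hLC : (L.map C).charpoly.Splits := by
    rw [charpoly_map]
    exact hL.map C
  rw [charpoly, charmatrix_one_kronecker_sub_kronecker,
    det_one_kronecker_add_kronecker_eq_prod_of_splits hLC, charpoly_map,
    hL.roots_map_of_injective C_injective, Multiset.map_map]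
  simp only [Function.comp_def, charpoly, charmatrix_sub_smul]

theorem spectrum_kronecker_union_general {L : Matrix ι ι R} (hL : L.charpoly.Splits)
    (A P : Matrix κ κ R) (c : R) :
    {z | ((1 : Matrix ι ι R) ⊗ₖ A - c • (L ⊗ₖ P)).charpoly.IsRoot z} =
      ⋃ l ∈ {l | L.charpoly.IsRoot l}, {z | (A - (c * l) • P).charpoly.IsRoot z} := by
  ext z
  rw [← kronecker_smul, Set.mem_ofPred, charpoly_one_kronecker_sub_kronecker_eq_prod_of_splits hL,
    IsRoot, eval_multiset_prod, Multiset.prod_eq_zero_iff]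
  simp [L.charpoly_monic.ne_zero, smul_smul, mul_comm c]

end

/-- The spectrum (set of roots of the characteristic polynomial over ℂ) of
`I_N ⊗ A − c·L ⊗ (BK)` equals the union, over the eigenvalues `λ` of `L`,
of the spectra of `A − cλ·BK`. -/
theorem spectrum_kronecker_union (N n m : ℕ)
    (L : Matrix (Fin N) (Fin N) ℝ)
    (A : Matrix (Fin n) (Fin n) ℝ) (B : Matrix (Fin n) (Fin m) ℝ)
    (K : Matrix (Fin m) (Fin n) ℝ) (c : ℝ) :
    {z : ℂ |
        (((1 : Matrix (Fin N) (Fin N) ℂ) ⊗ₖ (A.map (Complex.ofReal ·)) -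
            (c : ℂ) • ((L.map (Complex.ofReal ·)) ⊗ₖ
              (B.map (Complex.ofReal ·) * K.map (Complex.ofReal ·)))).charpoly).IsRoot z}
      = ⋃ lam ∈ {l : ℂ | ((L.map (Complex.ofReal ·)).charpoly).IsRoot l},
          {z : ℂ |
            ((A.map (Complex.ofReal ·) - ((c : ℂ) * lam) •
                (B.map (Complex.ofReal ·) * K.map (Complex.ofReal ·))).charpoly).IsRoot z} :=
  spectrum_kronecker_union_general (IsAlgClosed.splits _) _ _ _
end

section
/- Let A ∈ ℝ^{n×n}, B ∈ ℝ^{n×m}, R ∈ ℝ^{m×m} symmetric positive definite, C ∈ ℝ^{p×n}, and Q = CᵀC. Assume (A,B) is controllable, i.e., the n×(nm) controllability matrix [B, AB, …, A^{n−1}B] has rank n, and (A,C) is observable, i.e., the (pn)×n matrix obtained by stacking C, CA, …, CA^{n−1} has rank n. Consider the Riccati iteration P_{k+1} = Aᵀ(P_k − P_k B (BᵀP_k B + R)⁻¹ BᵀP_k)A + Q. Then there exists a symmetric positive definite matrix P such that: (i) for every symmetric positive semidefinite initial matrix P_0, the sequence P_k converges to P as k → ∞; and (ii) P is the unique symmetric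 positive semidefinite solution of the algebraic Riccati equation P = Aᵀ(P − P B (BᵀP B + R)⁻¹ BᵀP)A + Q. -/
open Matrix Filter

/-!
`Xᴴ * riccatiMap P * X` is the minimum over controls `U` of the one-step cost `bellmanCost P X U`,
so the Riccati map is monotone and the iteration started from `0` increases. It is bounded by the
cost of any controls steering every state to the origin, hence converges to a fixed point `P`.
The cost identity at a fixed point is a Lyapunov inequality for the optimal closed loop
`D = A + B * K`; with observability it forces `P` to be positive definite and `D ^ k → 0`. If `Y`
is the iteration from `0` and `X` the iteration from any positive semidefinite matrix, then
`Y k ≤ X k ≤ P + (D ^ k)ᴴ * (X 0 - P) * D ^ k`, and both bounds tend to `P`.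
-/

section

open scoped ComplexOrder MatrixOrder Topology

namespace LoewnerOrder

variable {𝕜 m n ι : Type*} [RCLike 𝕜] [Fintype m]

section Trace

variable [Fintype n]

section FrobeniusNorm

open scoped Matrix.Norms.Frobenius

theorem norm_apply_le_frobenius_norm (X : Matrix m n 𝕜) (i : m) (j : n) : ‖X i j‖ ≤ ‖X‖ :=
  (PiLp.norm_apply_le (WithLp.toLp 2 (X i)) j).trans
    (PiLp.norm_apply_le (WithLp.toLp 2 fun i => WithLp.toLp 2 (X i)) i)

theorem frobenius_norm_sq_eq_re_trace (X : Matrix m n 𝕜) :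
    ‖X‖ ^ 2 = RCLike.re (Xᴴ * X).trace := by
  have hsum : 0 ≤ ∑ i, ∑ j, ‖X i j‖ ^ 2 := by positivity
  simp only [frobenius_norm_def, Real.rpow_two, ← Real.sqrt_eq_rpow, Real.sq_sqrt hsum,
    Matrix.trace, diag_apply, mul_apply, conjTranspose_apply, RCLike.star_def,
    RCLike.conj_mul, map_sum, ← RCLike.ofReal_pow, RCLike.ofReal_re]
  exact Finset.sum_comm

theorem norm_apply_le_re_trace_of_posSemidef {M : Matrix n n 𝕜} (hM : M.PosSemidef) (i j : n) :
    ‖M i j‖ ≤ RCLike.re M.trace := by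
  classical
  obtain ⟨X, rfl⟩ := CStarAlgebra.nonneg_iff_eq_star_mul_self.mp hM.nonneg
  rw [star_eq_conjTranspose]
  calc ‖(Xᴴ * X) i j‖ ≤ ‖Xᴴ * X‖ := norm_apply_le_frobenius_norm _ i j
    _ ≤ ‖Xᴴ‖ * ‖X‖ := frobenius_norm_mul _ _
    _ = RCLike.re (Xᴴ * X).trace := by
      rw [frobenius_norm_conjTranspose, ← sq, frobenius_norm_sq_eq_re_trace]

theorem norm_apply_le_sqrt_re_trace (X : Matrix m n 𝕜) (i : m) (j : n) :
    ‖X i j‖ ≤ √(RCLike.re (Xᴴ * X).trace) :=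
  Real.le_sqrt_of_sq_le <| by
    rw [← frobenius_norm_sq_eq_re_trace]
    gcongr
    exact norm_apply_le_frobenius_norm X i j

end FrobeniusNorm

theorem tendsto_zero_of_tendsto_re_trace {M : ι → Matrix n n 𝕜} {l : Filter ι}
    (hM : ∀ k, 0 ≤ M k) (h : Tendsto (fun k => RCLike.re (M k).trace) l (𝓝 0)) :
    Tendsto M l (𝓝 0) :=
  tendsto_pi_nhds.2 fun i => tendsto_pi_nhds.2 fun j =>
    squeeze_zero_norm (fun k => norm_apply_le_re_trace_of_posSemidef (hM k).posSemidef i j) h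

theorem re_trace_mono : Monotone fun M : Matrix n n 𝕜 => RCLike.re M.trace := fun M N h => by
  simpa [trace_sub] using (RCLike.nonneg_iff.1 (le_iff.1 h).trace_nonneg).1

end Trace

section Convergence

variable [Finite n]

theorem tendsto_zero_of_nonneg_of_le {M N : ι → Matrix n n 𝕜} {l : Filter ι}
    (hM : ∀ k, 0 ≤ M k) (hMN : ∀ k, M k ≤ N k) (hN : Tendsto N l (𝓝 0)) :
    Tendsto M l (𝓝 0) := by
  cases nonempty_fintype n
  have hcont : Continuous fun Y : Matrix n n 𝕜 => RCLike.re Y.trace := by fun_prop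
  have htr : Tendsto (fun k => RCLike.re (N k).trace) l (𝓝 0) := by
    simpa [Function.comp_def] using (hcont.tendsto 0).comp hN
  refine tendsto_zero_of_tendsto_re_trace hM
    (squeeze_zero (fun k => ?_) (fun k => re_trace_mono (hMN k)) htr)
  simpa using re_trace_mono (hM k)

theorem exists_tendsto_of_monotone_of_bddAbove {P : ℕ → Matrix n n 𝕜} (hP : Monotone P)
    (hbdd : BddAbove (Set.range P)) : ∃ L, Tendsto P atTop (𝓝 L) := by
  cases nonempty_fintype n
  have htr : CauchySeq fun k => RCLike.re (P k).trace :=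
    (tendsto_atTop_ciSup (re_trace_mono.comp hP)
      (Set.range_comp _ P ▸ re_trace_mono.map_bddAbove hbdd)).cauchySeq
  have hentry : ∀ i j, CauchySeq fun k => P k i j := fun i j => by
    refine Metric.cauchySeq_iff'.2 fun ε hε => ?_
    obtain ⟨N, hN⟩ := Metric.cauchySeq_iff'.1 htr ε hε
    refine ⟨N, fun k hk => ?_⟩
    calc dist (P k i j) (P N i j) = ‖(P k - P N) i j‖ := dist_eq_norm _ _
      _ ≤ RCLike.re (P k - P N).trace :=
        norm_apply_le_re_trace_of_posSemidef (le_iff.1 (hP hk)) i j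
      _ = RCLike.re (P k).trace - RCLike.re (P N).trace := by rw [trace_sub, map_sub]
      _ < ε := (le_abs_self _).trans_lt (hN k hk)
  choose L hL using fun i j => cauchySeq_tendsto_of_complete (hentry i j)
  exact ⟨of L, tendsto_pi_nhds.2 fun i => tendsto_pi_nhds.2 fun j => hL i j⟩

theorem tendsto_sub_succ_of_antitone_of_nonneg {V : ℕ → Matrix n n 𝕜} (hV : Antitone V)
    (hV₀ : ∀ k, 0 ≤ V k) : Tendsto (fun k => V k - V (k + 1)) atTop (𝓝 0) := by
  obtain ⟨L, hL⟩ := exists_tendsto_of_monotone_of_bddAbove (P := -V) hV.neg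
    ⟨0, Set.forall_mem_range.2 fun k => neg_nonpos.2 (hV₀ k)⟩
  simpa [Function.comp_def, sub_eq_add_neg, add_comm] using
    ((tendsto_add_atTop_iff_nat 1).2 hL).sub hL

theorem isClosed_setOf_posSemidef : IsClosed {M : Matrix n n 𝕜 | M.PosSemidef} := by
  cases nonempty_fintype n
  simp only [posSemidef_iff_dotProduct_mulVec, Set.ofPred_and, Set.ofPred_forall]
  refine (isClosed_eq (by fun_prop) continuous_id).inter (isClosed_iInter fun x => ?_)
  exact isClosed_le continuous_const (by fun_prop)

theorem tendsto_zero_of_tendsto_conjTranspose_mul_mul {R : Matrix m m 𝕜} (hR : R.PosDef)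
    {X : ι → Matrix m n 𝕜} {l : Filter ι}
    (h : Tendsto (fun k => (X k)ᴴ * R * X k) l (𝓝 0)) : Tendsto X l (𝓝 0) := by
  classical
  cases nonempty_fintype n
  obtain ⟨S, hS, rfl⟩ :=
    CStarAlgebra.isStrictlyPositive_iff_eq_star_mul_self.1 hR.isStrictlyPositive
  have hcont : Continuous fun M : Matrix n n 𝕜 => √(RCLike.re M.trace) := by fun_prop
  have htr : Tendsto (fun k => √(RCLike.re ((S * X k)ᴴ * (S * X k)).trace)) l (𝓝 0) := by
    simpa [Function.comp_def, star_eq_conjTranspose, Matrix.mul_assoc]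
      using (hcont.tendsto 0).comp h
  have hSX : Tendsto (fun k => S * X k) l (𝓝 0) :=
    tendsto_pi_nhds.2 fun i => tendsto_pi_nhds.2 fun j => squeeze_zero_norm
      (fun k => norm_apply_le_sqrt_re_trace (S * X k) i j) htr
  have hinv : Continuous fun Y : Matrix m n 𝕜 => S⁻¹ * Y := by fun_prop
  simpa [Function.comp_def, nonsing_inv_mul_cancel_left _ _ ((isUnit_iff_isUnit_det S).1 hS)]
    using (hinv.tendsto 0).comp hSX

end Convergence

theorem conjTranspose_mul_mul_le [Finite n] {P Q : Matrix m m 𝕜} (h : P ≤ Q)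
    (X : Matrix m n 𝕜) : Xᴴ * P * X ≤ Xᴴ * Q * X := by
  rw [le_iff] at h ⊢
  simpa only [Matrix.mul_sub, Matrix.sub_mul] using h.conjTranspose_mul_mul_same X

theorem posDef_conjTranspose_mul_mul_add [Finite n] {P : Matrix m m 𝕜}
    (hP : P.PosSemidef) (B : Matrix m n 𝕜) {R : Matrix n n 𝕜} (hR : R.PosDef) :
    (Bᴴ * P * B + R).PosDef :=
  PosDef.posSemidef_add (hP.conjTranspose_mul_mul_same B) hR

variable [Fintype n]

theorem mulVec_eq_zero_of_nonneg_of_le {M N : Matrix n n 𝕜} (hM : 0 ≤ M) (hMN : M ≤ N)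
    {x : n → 𝕜} (hx : N *ᵥ x = 0) : M *ᵥ x = 0 := by
  rw [← hM.posSemidef.dotProduct_mulVec_zero_iff]
  refine le_antisymm ?_ (hM.posSemidef.dotProduct_mulVec_nonneg x)
  simpa [sub_mulVec, hx] using (le_iff.1 hMN).dotProduct_mulVec_nonneg x

theorem mulVec_mulVec_eq_zero_of_posSemidef {P : Matrix m m 𝕜} (hP : P.PosSemidef)
    {X : Matrix m n 𝕜} {x : n → 𝕜} (hx : (Xᴴ * P * X) *ᵥ x = 0) : P *ᵥ X *ᵥ x = 0 := by
  rw [← hP.dotProduct_mulVec_zero_iff, star_mulVec, ← dotProduct_mulVec, mulVec_mulVec,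
    mulVec_mulVec, hx, dotProduct_zero]

theorem mulVec_eq_zero_of_posDef {R : Matrix m m 𝕜} (hR : R.PosDef) {X : Matrix m n 𝕜}
    {x : n → 𝕜} (hx : (Xᴴ * R * X) *ᵥ x = 0) : X *ᵥ x = 0 := by
  classical
  refine mulVec_injective_of_isUnit hR.isUnit ?_
  simpa only [mulVec_zero] using mulVec_mulVec_eq_zero_of_posSemidef hR.posSemidef hx

end LoewnerOrder

open LoewnerOrder

section RankCondition

variable {K n m p ℓ ι : Type*} [Field K] [Fintype n] [DecidableEq n]

theorem exists_mul_eq_one_of_rank_eq_card [Fintype ι] {M : Matrix n ι K}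
    (hM : M.rank = Fintype.card n) : ∃ W : Matrix ι n K, M * W = 1 := by
  classical
  rw [← mulVec_surjective_iff_exists_right_inverse]
  have hrange : LinearMap.range M.mulVecLin = ⊤ :=
    Submodule.eq_top_of_finrank_eq (hM.trans (Module.finrank_fintype_fun_eq_card K).symm)
  exact LinearMap.range_eq_top.1 hrange

/-- The `N`-step controllability matrix `[B, A B, …, A ^ (N - 1) B]` of the pair `(A, B)`; the
column `(i, a)` is column `a` of the block `A ^ i * B`. -/
def controllabilityMatrix (A : Matrix n n K) (B : Matrix n m K) (N : ℕ) :
    Matrix n (Fin N × m) K :=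
  of fun i q => (A ^ (q.1 : ℕ) * B) i q.2

/-- The `N`-step observability matrix of the pair `(A, C)`, stacking `C, C A, …, C A ^ (N - 1)`;
the row `(i, a)` is row `a` of the block `C * A ^ i`. -/
def observabilityMatrix (A : Matrix n n K) (C : Matrix p n K) (N : ℕ) :
    Matrix (Fin N × p) n K :=
  of fun q j => (C * A ^ (q.1 : ℕ)) q.2 j

/-- The pair `(A, B)` is null-controllable in `N` steps: every state can be steered to the origin.
One matrix equation treats all initial states `x` at once; the control applied with `i` steps
left after it is `U i *ᵥ x`. -/
def IsNullControllable [Fintype m] (A : Matrix n n K) (B : Matrix n m K) (N : ℕ) : Prop :=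
  ∃ U : Fin N → Matrix m n K, A ^ N + ∑ i : Fin N, A ^ (i : ℕ) * B * U i = 0

theorem controllabilityMatrix_mul [Fintype m] (A : Matrix n n K) (B : Matrix n m K) (N : ℕ)
    (V : Matrix (Fin N × m) ℓ K) :
    controllabilityMatrix A B N * V =
      ∑ i : Fin N, A ^ (i : ℕ) * B * of fun a c => V (i, a) c := by
  ext r c
  rw [mul_apply, Fintype.sum_prod_type, Matrix.sum_apply]
  rfl

theorem isNullControllable_of_rank_eq_card [Fintype m] {A : Matrix n n K} {B : Matrix n m K}
    {N : ℕ} (h : (controllabilityMatrix A B N).rank = Fintype.card n) :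
    IsNullControllable A B N := by
  obtain ⟨W, hW⟩ := exists_mul_eq_one_of_rank_eq_card h
  refine ⟨fun i => of fun a c => (W * -A ^ N) (i, a) c, ?_⟩
  rw [← controllabilityMatrix_mul, ← Matrix.mul_assoc, hW, Matrix.one_mul, add_neg_cancel]

theorem exists_mul_observabilityMatrix_eq_one [Fintype p] {A : Matrix n n K} {C : Matrix p n K}
    {N : ℕ} (h : (observabilityMatrix A C N).rank = Fintype.card n) :
    ∃ W : Matrix n (Fin N × p) K, W * observabilityMatrix A C N = 1 := by
  obtain ⟨W, hW⟩ := exists_mul_eq_one_of_rank_eq_card ((rank_transpose _).trans h)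
  exact ⟨Wᵀ, transpose_injective (by rw [transpose_mul, transpose_transpose, hW, transpose_one])⟩

theorem eq_zero_of_observable [Finite p] {A : Matrix n n K} {C : Matrix p n K} {N : ℕ}
    (h : (observabilityMatrix A C N).rank = Fintype.card n) {x : n → K}
    (hx : ∀ i, (C * A ^ i) *ᵥ x = 0) : x = 0 := by
  cases nonempty_fintype p
  obtain ⟨W, hW⟩ := exists_mul_observabilityMatrix_eq_one h
  have hOx : observabilityMatrix A C N *ᵥ x = 0 := funext fun q => congrFun (hx q.1) q.2
  simpa [hW] using congrArg (W *ᵥ ·) hOx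

theorem tendsto_zero_of_observable [Finite p] [TopologicalSpace K] [IsTopologicalRing K]
    {A : Matrix n n K} {C : Matrix p n K} {N : ℕ}
    (h : (observabilityMatrix A C N).rank = Fintype.card n) {Z : ι → Matrix n ℓ K}
    {l : Filter ι} (hZ : ∀ i, Tendsto (fun k => C * A ^ i * Z k) l (𝓝 0)) :
    Tendsto Z l (𝓝 0) := by
  cases nonempty_fintype p
  obtain ⟨W, hW⟩ := exists_mul_observabilityMatrix_eq_one h
  have hOZ : Tendsto (fun k => observabilityMatrix A C N * Z k) l (𝓝 0) :=
    tendsto_pi_nhds.2 fun q => (hZ q.1).apply_nhds q.2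
  have hcont : Continuous fun Y : Matrix (Fin N × p) ℓ K => W * Y := by fun_prop
  simpa [Function.comp_def, ← Matrix.mul_assoc, hW] using (hcont.tendsto 0).comp hOZ

end RankCondition

section RiccatiMap

variable {𝕜 n m p ℓ : Type*} [Fintype n] [Fintype m] [DecidableEq m] [Fintype p]

section CommRing

variable [CommRing 𝕜] [StarRing 𝕜]

/-- The right-hand side of the discrete-time Riccati iteration with state weight `Cᴴ * C` and
control weight `R`. -/
noncomputable def riccatiMap (A : Matrix n n 𝕜) (B : Matrix n m 𝕜) (R : Matrix m m 𝕜)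
    (C : Matrix p n 𝕜) (P : Matrix n n 𝕜) : Matrix n n 𝕜 :=
  Aᴴ * (P - P * B * (Bᴴ * P * B + R)⁻¹ * Bᴴ * P) * A + Cᴴ * C

/-- The optimal feedback gain `K`, for the control `u = K x`, when the cost-to-go from the next
state is given by `P`. -/
noncomputable def riccatiGain (A : Matrix n n 𝕜) (B : Matrix n m 𝕜) (R : Matrix m m 𝕜)
    (P : Matrix n n 𝕜) : Matrix m n 𝕜 :=
  -((Bᴴ * P * B + R)⁻¹ * Bᴴ * P * A)

/-- The cost of applying the control `U` in state `X` for one step, with cost-to-go `P` from the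
next state `A * X + B * U`. States and controls are matrices, whose columns are trajectories
treated simultaneously; the cost is then a Gram-type matrix. -/
def bellmanCost (A : Matrix n n 𝕜) (B : Matrix n m 𝕜) (R : Matrix m m 𝕜) (C : Matrix p n 𝕜)
    (P : Matrix n n 𝕜) (X : Matrix n ℓ 𝕜) (U : Matrix m ℓ 𝕜) : Matrix ℓ ℓ 𝕜 :=
  (A * X + B * U)ᴴ * P * (A * X + B * U) + Uᴴ * R * U + (C * X)ᴴ * (C * X)

theorem bellmanCost_eq_riccatiMap_add {A : Matrix n n 𝕜} {B : Matrix n m 𝕜}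
    {R : Matrix m m 𝕜} {C : Matrix p n 𝕜} {P : Matrix n n 𝕜} (hP : P.IsHermitian)
    (hR : R.IsHermitian) (hS : IsUnit (Bᴴ * P * B + R)) (X : Matrix n ℓ 𝕜)
    (U : Matrix m ℓ 𝕜) :
    bellmanCost A B R C P X U = Xᴴ * riccatiMap A B R C P * X +
      (U - riccatiGain A B R P * X)ᴴ * (Bᴴ * P * B + R) * (U - riccatiGain A B R P * X) := by
  set S := Bᴴ * P * B + R with hSdef
  set G := riccatiGain A B R P with hG
  have hSG : S * G = -(Bᴴ * P * A) := by
    rw [hG, riccatiGain, ← hSdef, Matrix.mul_neg, Matrix.mul_assoc, Matrix.mul_assoc,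
      mul_nonsing_inv_cancel_left _ _ ((isUnit_iff_isUnit_det S).1 hS), Matrix.mul_assoc]
  have hSH : Sᴴ = S := by
    simp only [hSdef, conjTranspose_add, conjTranspose_mul, conjTranspose_conjTranspose, hP.eq,
      hR.eq, Matrix.mul_assoc]
  have hGS : Gᴴ * S = -(Aᴴ * P * B) := by
    simpa [hSH, hP.eq, Matrix.mul_assoc] using congrArg conjTranspose hSG
  have hric : riccatiMap A B R C P = Aᴴ * P * A + Aᴴ * P * B * G + Cᴴ * C := by
    simp only [riccatiMap, hG, riccatiGain, Matrix.mul_sub, Matrix.sub_mul, Matrix.mul_neg,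
      Matrix.mul_assoc, ← sub_eq_add_neg]
  have hsq : (U - G * X)ᴴ * S * (U - G * X) =
      Uᴴ * S * U + Uᴴ * (Bᴴ * P * A) * X + Xᴴ * (Aᴴ * P * B) * U - Xᴴ * (Aᴴ * P * B) * G * X := by
    calc (U - G * X)ᴴ * S * (U - G * X)
        = Uᴴ * S * U - Uᴴ * (S * G) * X - Xᴴ * (Gᴴ * S) * U + Xᴴ * (Gᴴ * S) * G * X := by
          simp only [conjTranspose_sub, conjTranspose_mul, Matrix.mul_sub, Matrix.sub_mul,
            Matrix.mul_assoc]
          abel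
      _ = _ := by
          rw [hSG, hGS]
          simp only [Matrix.mul_neg, Matrix.neg_mul, sub_neg_eq_add, ← sub_eq_add_neg]
  rw [hsq, hric, bellmanCost, hSdef]
  simp only [conjTranspose_add, conjTranspose_mul, Matrix.mul_add, Matrix.add_mul,
    Matrix.mul_assoc]
  abel

end CommRing

variable [RCLike 𝕜] {A : Matrix n n 𝕜} {B : Matrix n m 𝕜} {R : Matrix m m 𝕜} {C : Matrix p n 𝕜}
  {P Q : Matrix n n 𝕜}

theorem conjTranspose_mul_riccatiMap_mul_le [Finite ℓ] (hR : R.PosDef) (hP : P.PosSemidef)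
    (X : Matrix n ℓ 𝕜) (U : Matrix m ℓ 𝕜) :
    Xᴴ * riccatiMap A B R C P * X ≤ bellmanCost A B R C P X U := by
  have hS := posDef_conjTranspose_mul_mul_add hP B hR
  rw [bellmanCost_eq_riccatiMap_add hP.isHermitian hR.isHermitian hS.isUnit]
  exact le_add_of_nonneg_right (hS.posSemidef.conjTranspose_mul_mul_same _).nonneg

theorem riccatiMap_eq_closedLoop (hR : R.PosDef) (hP : P.PosSemidef) :
    riccatiMap A B R C P =
      (A + B * riccatiGain A B R P)ᴴ * P * (A + B * riccatiGain A B R P) +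
        (riccatiGain A B R P)ᴴ * R * riccatiGain A B R P + Cᴴ * C := by
  classical
  have hS := posDef_conjTranspose_mul_mul_add hP B hR
  simpa [bellmanCost] using (bellmanCost_eq_riccatiMap_add (A := A) (C := C) hP.isHermitian
    hR.isHermitian hS.isUnit 1 (riccatiGain A B R P)).symm

theorem riccatiMap_le_closedLoop (hR : R.PosDef) (hP : P.PosSemidef)
    (K : Matrix m n 𝕜) :
    riccatiMap A B R C P ≤ (A + B * K)ᴴ * P * (A + B * K) + Kᴴ * R * K + Cᴴ * C := by
  classical
  simpa [bellmanCost] using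
    conjTranspose_mul_riccatiMap_mul_le (A := A) (B := B) (C := C) hR hP 1 K

theorem posSemidef_riccatiMap (hR : R.PosDef) (hP : P.PosSemidef) :
    (riccatiMap A B R C P).PosSemidef := by
  rw [riccatiMap_eq_closedLoop hR hP]
  exact ((hP.conjTranspose_mul_mul_same _).add (hR.posSemidef.conjTranspose_mul_mul_same _)).add
    (posSemidef_conjTranspose_mul_self C)

theorem riccatiMap_sub_riccatiMap_le (hR : R.PosDef) (hP : P.PosSemidef)
    (hQ : Q.PosSemidef) :
    riccatiMap A B R C Q - riccatiMap A B R C P ≤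
      (A + B * riccatiGain A B R P)ᴴ * (Q - P) * (A + B * riccatiGain A B R P) := by
  rw [riccatiMap_eq_closedLoop hR hP, sub_le_iff_le_add]
  refine (riccatiMap_le_closedLoop hR hQ (riccatiGain A B R P)).trans_eq ?_
  rw [Matrix.mul_sub, Matrix.sub_mul]
  abel

theorem riccatiMap_le_riccatiMap (hR : R.PosDef) (hP : P.PosSemidef)
    (hPQ : P ≤ Q) : riccatiMap A B R C P ≤ riccatiMap A B R C Q := by
  have hQ : Q.PosSemidef := (hP.nonneg.trans hPQ).posSemidef
  rw [← sub_nonpos]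
  refine (riccatiMap_sub_riccatiMap_le hR hQ hP).trans ?_
  simpa only [Matrix.mul_zero, Matrix.zero_mul] using
    conjTranspose_mul_mul_le (sub_nonpos.2 hPQ) (A + B * riccatiGain A B R Q)

theorem continuousAt_riccatiMap (hR : R.PosDef) (hP : P.PosSemidef) :
    ContinuousAt (riccatiMap A B R C) P := by
  have hdet := (isUnit_iff_isUnit_det _).1 (posDef_conjTranspose_mul_mul_add hP B hR).isUnit
  have hinv : ContinuousAt (fun P => (Bᴴ * P * B + R)⁻¹) P := by
    refine (continuousAt_matrix_inv _ ?_).comp (f := fun P => Bᴴ * P * B + R) (by fun_prop)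
    rw [Ring.inverse_eq_inv']
    exact continuousAt_inv₀ hdet.ne_zero
  unfold riccatiMap
  fun_prop

end RiccatiMap

section Lyapunov

variable {𝕜 n m p : Type*} [RCLike 𝕜] [Fintype n] [DecidableEq n]

theorem tendsto_conj_pow_of_lyapunov {D P W : Matrix n n 𝕜} (hP : P.PosSemidef) (hW : 0 ≤ W)
    (h : Dᴴ * P * D + W ≤ P) : Tendsto (fun k => (D ^ k)ᴴ * W * D ^ k) atTop (𝓝 0) := by
  let V : ℕ → Matrix n n 𝕜 := fun k => (D ^ k)ᴴ * P * D ^ k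
  have hdrop : ∀ k, (D ^ k)ᴴ * W * D ^ k ≤ V k - V (k + 1) := fun k => by
    rw [le_sub_iff_add_le']
    simpa only [V, pow_succ', conjTranspose_mul, Matrix.mul_add, Matrix.add_mul,
      Matrix.mul_assoc] using conjTranspose_mul_mul_le h (D ^ k)
  have hW₀ : ∀ k, 0 ≤ (D ^ k)ᴴ * W * D ^ k := fun k =>
    (hW.posSemidef.conjTranspose_mul_mul_same _).nonneg
  have hV : Antitone V :=
    antitone_nat_of_succ_le fun k => sub_nonneg.1 ((hW₀ k).trans (hdrop k))
  exact tendsto_zero_of_nonneg_of_le hW₀ hdrop (tendsto_sub_succ_of_antitone_of_nonneg hV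
    fun k => (hP.conjTranspose_mul_mul_same _).nonneg)

variable [Fintype m] [Fintype p] {A : Matrix n n 𝕜} {B : Matrix n m 𝕜} {R : Matrix m m 𝕜}
  {C : Matrix p n 𝕜} {K : Matrix m n 𝕜} {P : Matrix n n 𝕜} {N : ℕ}

theorem tendsto_closedLoop_pow_of_lyapunov (hR : R.PosDef)
    (hobs : (observabilityMatrix A C N).rank = Fintype.card n) (hP : P.PosSemidef)
    (h : (A + B * K)ᴴ * P * (A + B * K) + Kᴴ * R * K + Cᴴ * C ≤ P) :
    Tendsto (fun k => (A + B * K) ^ k) atTop (𝓝 0) := by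
  classical
  set D := A + B * K with hD
  have hKK : 0 ≤ Kᴴ * R * K := (hR.posSemidef.conjTranspose_mul_mul_same K).nonneg
  have hCC : 0 ≤ Cᴴ * C := (posSemidef_conjTranspose_mul_self C).nonneg
  have hcontrol : Tendsto (fun k => K * D ^ k) atTop (𝓝 0) := by
    refine tendsto_zero_of_tendsto_conjTranspose_mul_mul hR ?_
    simpa only [conjTranspose_mul, Matrix.mul_assoc] using
      tendsto_conj_pow_of_lyapunov hP hKK ((le_add_of_nonneg_right hCC).trans h)
  have houtput : Tendsto (fun k => C * D ^ k) atTop (𝓝 0) := by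
    refine tendsto_zero_of_tendsto_conjTranspose_mul_mul (R := 1) PosDef.one ?_
    simpa only [conjTranspose_mul, Matrix.mul_assoc, Matrix.one_mul] using
      tendsto_conj_pow_of_lyapunov hP hCC
        ((add_le_add_left (le_add_of_nonneg_right hKK) _).trans h)
  refine tendsto_zero_of_observable hobs fun i => ?_
  induction i with
  | zero => simpa only [pow_zero, Matrix.mul_one] using houtput
  | succ i ih =>
    have hsplit : ∀ k, C * A ^ (i + 1) * D ^ k =
        C * A ^ i * D ^ (k + 1) - C * A ^ i * B * (K * D ^ k) := fun k => by
      simp only [hD, pow_succ A i, pow_succ' (A + B * K) k, Matrix.add_mul, Matrix.mul_add,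
        Matrix.mul_assoc, add_sub_cancel_right]
    have hcont : Continuous fun Y : Matrix m n 𝕜 => C * A ^ i * B * Y := by fun_prop
    simpa only [hsplit, Function.comp_def, Matrix.mul_zero, sub_zero] using
      ((tendsto_add_atTop_iff_nat 1).2 ih).sub ((hcont.tendsto 0).comp hcontrol)

theorem posDef_of_lyapunov (hR : R.PosDef)
    (hobs : (observabilityMatrix A C N).rank = Fintype.card n) (hP : P.PosSemidef)
    (h : (A + B * K)ᴴ * P * (A + B * K) + Kᴴ * R * K + Cᴴ * C ≤ P) : P.PosDef := by
  have hDD : 0 ≤ (A + B * K)ᴴ * P * (A + B * K) := (hP.conjTranspose_mul_mul_same _).nonneg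
  have hKK : 0 ≤ Kᴴ * R * K := (hR.posSemidef.conjTranspose_mul_mul_same K).nonneg
  have hCC : 0 ≤ Cᴴ * C := (posSemidef_conjTranspose_mul_self C).nonneg
  have hDDKK := (le_add_of_nonneg_right hCC).trans h
  have hstep : ∀ x, P *ᵥ x = 0 → C *ᵥ x = 0 ∧ P *ᵥ A *ᵥ x = 0 := fun x hx => by
    have hK : K *ᵥ x = 0 := mulVec_eq_zero_of_posDef hR
      (mulVec_eq_zero_of_nonneg_of_le hKK ((le_add_of_nonneg_left hDD).trans hDDKK) hx)
    have hC : (Cᴴ * C) *ᵥ x = 0 := mulVec_eq_zero_of_nonneg_of_le hCC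
      ((le_add_of_nonneg_left (add_nonneg hDD hKK)).trans h) hx
    have hA := mulVec_mulVec_eq_zero_of_posSemidef hP
      (mulVec_eq_zero_of_nonneg_of_le hDD ((le_add_of_nonneg_right hKK).trans hDDKK) hx)
    refine ⟨(conjTranspose_mul_self_mulVec_eq_zero C x).1 hC, ?_⟩
    rwa [add_mulVec, ← mulVec_mulVec, hK, mulVec_zero, add_zero] at hA
  have hker : ∀ x, P *ᵥ x = 0 → x = 0 := fun x hx => by
    have horbit : ∀ i, P *ᵥ (A ^ i) *ᵥ x = 0 := fun i => by
      induction i with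
      | zero => simpa only [pow_zero, one_mulVec] using hx
      | succ i ih => simpa only [pow_succ', mulVec_mulVec, Matrix.mul_assoc] using (hstep _ ih).2
    exact eq_zero_of_observable hobs fun i => by
      simpa only [mulVec_mulVec] using (hstep _ (horbit i)).1
  refine hP.posDef_iff_isUnit.2 (mulVec_injective_iff_isUnit.1 ?_)
  exact (injective_iff_map_eq_zero P.mulVecLin).2 hker

end Lyapunov

section RiccatiIteration

variable {𝕜 n m p ℓ : Type*} [RCLike 𝕜] [Fintype n] [Fintype m] [DecidableEq m] [Fintype p]
  {A : Matrix n n 𝕜} {B : Matrix n m 𝕜} {R : Matrix m m 𝕜} {C : Matrix p n 𝕜}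
  {P : Matrix n n 𝕜} {X Y : ℕ → Matrix n n 𝕜} {N M : ℕ}

theorem posSemidef_of_riccati_iteration (hR : R.PosDef) (hX₀ : (X 0).PosSemidef)
    (hX : ∀ k, X (k + 1) = riccatiMap A B R C (X k)) (k : ℕ) : (X k).PosSemidef := by
  induction k with
  | zero => exact hX₀
  | succ k ih => exact hX k ▸ posSemidef_riccatiMap hR ih

theorem riccati_iteration_mono (hR : R.PosDef) (hX₀ : (X 0).PosSemidef) (hXY : X 0 ≤ Y 0)
    (hX : ∀ k, X (k + 1) = riccatiMap A B R C (X k))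
    (hY : ∀ k, Y (k + 1) = riccatiMap A B R C (Y k)) (k : ℕ) : X k ≤ Y k := by
  induction k with
  | zero => exact hXY
  | succ k ih =>
    rw [hX, hY]
    exact riccatiMap_le_riccatiMap hR (posSemidef_of_riccati_iteration hR hX₀ hX k) ih

theorem posSemidef_of_tendsto_riccati_iteration (hR : R.PosDef) (hX₀ : (X 0).PosSemidef)
    (hX : ∀ k, X (k + 1) = riccatiMap A B R C (X k)) (hP : Tendsto X atTop (𝓝 P)) :
    P.PosSemidef :=
  isClosed_setOf_posSemidef.mem_of_tendsto hP
    (Eventually.of_forall (posSemidef_of_riccati_iteration hR hX₀ hX))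

theorem riccatiMap_eq_of_tendsto_riccati_iteration (hR : R.PosDef) (hX₀ : (X 0).PosSemidef)
    (hX : ∀ k, X (k + 1) = riccatiMap A B R C (X k)) (hP : Tendsto X atTop (𝓝 P)) :
    riccatiMap A B R C P = P := by
  have hpsd := posSemidef_of_tendsto_riccati_iteration hR hX₀ hX hP
  refine tendsto_nhds_unique ((continuousAt_riccatiMap hR hpsd).tendsto.comp hP) ?_
  simpa only [Function.comp_def, hX] using (tendsto_add_atTop_iff_nat 1).2 hP

variable [DecidableEq n]

/-- The controls `U` steer every column of `Z` to the origin in `j` steps, where the cost-to-go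
vanishes whatever `X k` is; the bound is the accumulated cost of these controls. -/
theorem exists_forall_conj_riccati_iteration_le [Finite ℓ] (hR : R.PosDef)
    (hX₀ : (X 0).PosSemidef) (hX : ∀ k, X (k + 1) = riccatiMap A B R C (X k)) {j : ℕ}
    {Z : Matrix n ℓ 𝕜} {U : Fin j → Matrix m ℓ 𝕜}
    (hZ : A ^ j * Z + ∑ i : Fin j, A ^ (i : ℕ) * B * U i = 0) :
    ∃ M, ∀ k, Zᴴ * X (k + j) * Z ≤ M := by
  induction j generalizing Z with
  | zero =>
    obtain rfl : Z = 0 := by simpa using hZ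
    exact ⟨0, fun k => by simp⟩
  | succ j ih =>
    let V := U (Fin.last j)
    have hZ' : A ^ j * (A * Z + B * V) + ∑ i : Fin j, A ^ (i : ℕ) * B * U i.castSucc = 0 := by
      rw [← hZ, Fin.sum_univ_castSucc, pow_succ]
      simp only [V, Fin.val_castSucc, Fin.val_last, Matrix.mul_add, Matrix.mul_assoc]
      abel
    obtain ⟨M, hM⟩ := ih hZ'
    refine ⟨M + Vᴴ * R * V + (C * Z)ᴴ * (C * Z), fun k => ?_⟩
    calc Zᴴ * X (k + j + 1) * Z
        ≤ bellmanCost A B R C (X (k + j)) Z V := by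
          rw [hX]
          exact conjTranspose_mul_riccatiMap_mul_le hR
            (posSemidef_of_riccati_iteration hR hX₀ hX (k + j)) Z V
      _ ≤ M + Vᴴ * R * V + (C * Z)ᴴ * (C * Z) := by
          unfold bellmanCost
          gcongr
          exact hM k

theorem exists_tendsto_riccati_iteration_zero (hR : R.PosDef)
    (hctrb : IsNullControllable A B N) (hX₀ : X 0 = 0)
    (hX : ∀ k, X (k + 1) = riccatiMap A B R C (X k)) : ∃ L, Tendsto X atTop (𝓝 L) := by
  have h₀ : (X 0).PosSemidef := hX₀ ▸ PosSemidef.zero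
  have hmono : Monotone X := monotone_nat_of_le_succ <| riccati_iteration_mono hR h₀
    (hX₀ ▸ (posSemidef_of_riccati_iteration hR h₀ hX 1).nonneg) hX fun k => hX (k + 1)
  obtain ⟨U, hU⟩ := hctrb
  obtain ⟨M, hM⟩ := exists_forall_conj_riccati_iteration_le (Z := 1) (U := U) hR h₀ hX
    (by rwa [Matrix.mul_one])
  refine exists_tendsto_of_monotone_of_bddAbove hmono ⟨M, Set.forall_mem_range.2 fun k => ?_⟩
  exact (hmono (Nat.le_add_right k N)).trans (by simpa using hM k)

theorem riccati_iteration_sub_fixedPoint_le (hR : R.PosDef) (hP : P.PosSemidef)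
    (hfix : riccatiMap A B R C P = P) (hX₀ : (X 0).PosSemidef)
    (hX : ∀ k, X (k + 1) = riccatiMap A B R C (X k)) (k : ℕ) :
    X k - P ≤ ((A + B * riccatiGain A B R P) ^ k)ᴴ * (X 0 - P) *
      (A + B * riccatiGain A B R P) ^ k := by
  induction k with
  | zero => simp
  | succ k ih =>
    set D := A + B * riccatiGain A B R P
    calc X (k + 1) - P = riccatiMap A B R C (X k) - riccatiMap A B R C P := by rw [hX, hfix]
      _ ≤ Dᴴ * (X k - P) * D :=
        riccatiMap_sub_riccatiMap_le hR hP (posSemidef_of_riccati_iteration hR hX₀ hX k)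
      _ ≤ Dᴴ * ((D ^ k)ᴴ * (X 0 - P) * D ^ k) * D := conjTranspose_mul_mul_le ih D
      _ = (D ^ (k + 1))ᴴ * (X 0 - P) * D ^ (k + 1) := by
        simp only [pow_succ, conjTranspose_mul, Matrix.mul_assoc]

theorem tendsto_riccati_iteration_of_tendsto_zero (hR : R.PosDef)
    (hobs : (observabilityMatrix A C N).rank = Fintype.card n) (hP : P.PosSemidef)
    (hfix : riccatiMap A B R C P = P) (hY₀ : Y 0 = 0)
    (hY : ∀ k, Y (k + 1) = riccatiMap A B R C (Y k)) (hYP : Tendsto Y atTop (𝓝 P))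
    (hX₀ : (X 0).PosSemidef) (hX : ∀ k, X (k + 1) = riccatiMap A B R C (X k)) :
    Tendsto X atTop (𝓝 P) := by
  set D := A + B * riccatiGain A B R P
  have hDpow : Tendsto (fun k => D ^ k) atTop (𝓝 0) :=
    tendsto_closedLoop_pow_of_lyapunov hR hobs hP
      ((riccatiMap_eq_closedLoop hR hP).symm.trans hfix).le
  have hconj : Continuous fun Z : Matrix n n 𝕜 => Zᴴ * (X 0 - P) * Z := by fun_prop
  have hupper : Tendsto (fun k => (D ^ k)ᴴ * (X 0 - P) * D ^ k + (P - Y k)) atTop (𝓝 0) := by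
    simpa [Function.comp_def] using ((hconj.tendsto 0).comp hDpow).add (hYP.const_sub P)
  have hYX : ∀ k, Y k ≤ X k :=
    riccati_iteration_mono hR (hY₀ ▸ PosSemidef.zero) (hY₀ ▸ hX₀.nonneg) hY hX
  have hdiff : Tendsto (fun k => X k - Y k) atTop (𝓝 0) :=
    tendsto_zero_of_nonneg_of_le (fun k => sub_nonneg.2 (hYX k)) (fun k => by
      rw [← sub_add_sub_cancel (X k) P (Y k)]
      gcongr
      exact riccati_iteration_sub_fixedPoint_le hR hP hfix hX₀ hX k) hupper
  simpa using hdiff.add hYP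

theorem riccati_iteration_converges_general (hR : R.PosDef)
    (hctrb : IsNullControllable A B N)
    (hobs : (observabilityMatrix A C M).rank = Fintype.card n) :
    ∃ P : Matrix n n 𝕜, P.PosDef ∧
      (∀ X : ℕ → Matrix n n 𝕜, (X 0).PosSemidef →
        (∀ k, X (k + 1) = riccatiMap A B R C (X k)) → Tendsto X atTop (𝓝 P)) ∧
      P = riccatiMap A B R C P ∧
      ∀ P' : Matrix n n 𝕜, P'.PosSemidef → P' = riccatiMap A B R C P' → P' = P := by
  let Y : ℕ → Matrix n n 𝕜 := fun k => (riccatiMap A B R C)^[k] 0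
  have hY : ∀ k, Y (k + 1) = riccatiMap A B R C (Y k) :=
    fun k => Function.iterate_succ_apply' (riccatiMap A B R C) k 0
  obtain ⟨P, hYP⟩ := exists_tendsto_riccati_iteration_zero hR hctrb (X := Y) rfl hY
  have hP := posSemidef_of_tendsto_riccati_iteration hR PosSemidef.zero hY hYP
  have hfix := riccatiMap_eq_of_tendsto_riccati_iteration hR PosSemidef.zero hY hYP
  have hlim : ∀ X : ℕ → Matrix n n 𝕜, (X 0).PosSemidef →
      (∀ k, X (k + 1) = riccatiMap A B R C (X k)) → Tendsto X atTop (𝓝 P) := fun X =>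
    tendsto_riccati_iteration_of_tendsto_zero hR hobs hP hfix rfl hY hYP
  refine ⟨P, posDef_of_lyapunov hR hobs hP
    ((riccatiMap_eq_closedLoop hR hP).symm.trans hfix).le, hlim, hfix.symm, fun P' hP' hfix' => ?_⟩
  exact tendsto_nhds_unique tendsto_const_nhds (hlim (fun _ => P') hP' fun _ => hfix')

end RiccatiIteration

end

/-- Theorem 1 (Bertsekas): convergence of the Riccati iteration from any PSD
initial condition, and uniqueness of the PSD solution of the algebraic
Riccati equation, under controllability of (A,B) and observability of (A,C). -/
theorem riccati_iteration_converges (n m p : ℕ)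
    (A : Matrix (Fin n) (Fin n) ℝ) (B : Matrix (Fin n) (Fin m) ℝ)
    (R : Matrix (Fin m) (Fin m) ℝ) (C : Matrix (Fin p) (Fin n) ℝ)
    (hR : R.PosDef)
    (hctrb : (Matrix.of fun (i : Fin n) (q : Fin n × Fin m) =>
      (A ^ (q.1 : ℕ) * B) i q.2).rank = n)
    (hobs : (Matrix.of fun (q : Fin n × Fin p) (j : Fin n) =>
      (C * A ^ (q.1 : ℕ)) q.2 j).rank = n) :
    ∃ P : Matrix (Fin n) (Fin n) ℝ, P.PosDef ∧
      (∀ Pseq : ℕ → Matrix (Fin n) (Fin n) ℝ,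
          (Pseq 0).PosSemidef →
          (∀ k, Pseq (k + 1) =
            Aᵀ * (Pseq k - Pseq k * B * (Bᵀ * Pseq k * B + R)⁻¹ * Bᵀ * Pseq k) * A + Cᵀ * C) →
          Tendsto Pseq atTop (nhds P)) ∧
      P.PosSemidef ∧
      P = Aᵀ * (P - P * B * (Bᵀ * P * B + R)⁻¹ * Bᵀ * P) * A + Cᵀ * C ∧
      (∀ P' : Matrix (Fin n) (Fin n) ℝ, P'.PosSemidef →
        P' = Aᵀ * (P' - P' * B * (Bᵀ * P' * B + R)⁻¹ * Bᵀ * P') * A + Cᵀ * C → P' = P) := by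
  obtain ⟨P, hP, hlim, hfix, huniq⟩ := riccati_iteration_converges_general (C := C) hR
    (isNullControllable_of_rank_eq_card (hctrb.trans (Fintype.card_fin n).symm))
    (hobs.trans (Fintype.card_fin n).symm)
  exact ⟨P, hP, hlim, hP.posSemidef, hfix, huniq⟩
end

section
/- Let A ∈ ℝ^{n×n}, B ∈ ℝ^{n×m}, Q ∈ ℝ^{n×n} symmetric, γ > 0, μ ≥ 1, and let P ∈ ℝ^{n×n} be a symmetric positive semidefinite matrix satisfying P = Q + μ²AᵀPA − μ⁴AᵀPB(γI_m + μ²BᵀPB)⁻¹BᵀPA. Define H₁₂ = μ²AᵀPB, H₂₂ = γI_m + μ²BᵀPB, and K = H₂₂⁻¹H₁₂ᵀ. Then for every c ∈ ℝ and λ ∈ ℂ, letting M = μ·A − μcλ·BK (a complex n×n matrix) and s = 1 − 2c·Re λ + c²|λ|², the identity P − Mᴴ P M = Q − s·H₁₂H₂₂⁻¹H₁₂ᵀ + c²γ|λ|²·H₁₂H₂₂⁻²H₁₂ᵀ holds (all real matrices regarded as complex matrices entrywise). -/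
/-!
Call `K` optimal if `(W + Bᴴ P B) K = Bᴴ P A`, and put `S = Kᴴ (W + Bᴴ P B) K`. In the expansion of
`(A - t B K)ᴴ P (A - t B K)` both cross products `Aᴴ P B K` and `(B K)ᴴ P A` are equal to `S`, and
the quadratic term `(B K)ᴴ P B K` is `S - Kᴴ W K`. The coefficient of `S` is therefore
`star t * t - t - star t = star (1 - t) * (1 - t) - 1`, and the `-1` is absorbed by the Riccati
equation `P = Q + Aᴴ P A - S`. The theorem is the case `(μ A, μ B, γ I, c λ)` of `(A, B, W, t)`,
where `s = |1 - c λ|²`.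
-/

open Matrix

variable {R S k l m n : Type*} [CommRing R] [StarRing R] [Fintype m]

section OptimalGain

variable [Fintype n]

/-- `K` is an optimal gain for the one-step cost `uᴴ W u + (A x - B u)ᴴ P (A x - B u)`: the input
`u = K x` solves its normal equations. No inverse appears in them, so that optimality is visibly
preserved by star-compatible ring homomorphisms. -/
def IsOptimalGain (P : Matrix n n R) (W : Matrix m m R) (A : Matrix n l R) (B : Matrix n m R)
    (K : Matrix m l R) : Prop :=
  (W + Bᴴ * P * B) * K = Bᴴ * P * A

namespace IsOptimalGain

variable {P : Matrix n n R} {W : Matrix m m R} {A : Matrix n l R} {B : Matrix n m R}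
  {K : Matrix m l R}

theorem map [CommRing S] [StarRing S] [Algebra R S] [StarModule R S]
    (hK : IsOptimalGain P W A B K) :
    IsOptimalGain (P.map (algebraMap R S)) (W.map (algebraMap R S)) (A.map (algebraMap R S))
      (B.map (algebraMap R S)) (K.map (algebraMap R S)) := by
  have hstar : Function.Semiconj (algebraMap R S) star star := algebraMap_star_comm
  simpa only [IsOptimalGain, Matrix.map_mul, Matrix.map_add _ (map_add _),
    conjTranspose_map _ hstar] using congr_arg (·.map (algebraMap R S)) hK

theorem conjTranspose_mul_mul_mul_gain (hP : P.IsHermitian) (hW : W.IsHermitian)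
    (hK : IsOptimalGain P W A B K) : Aᴴ * P * (B * K) = Kᴴ * (W + Bᴴ * P * B) * K := by
  have h : Kᴴ * (W + Bᴴ * P * B) = Aᴴ * P * B := by
    simpa [Matrix.mul_assoc, hP.eq, hW.eq] using congr_arg conjTranspose hK
  rw [h, ← Matrix.mul_assoc]

theorem gain_conjTranspose_mul_mul (hK : IsOptimalGain P W A B K) :
    (B * K)ᴴ * P * A = Kᴴ * (W + Bᴴ * P * B) * K := by
  rw [Matrix.mul_assoc Kᴴ, hK, conjTranspose_mul]
  simp only [Matrix.mul_assoc]

theorem conjTranspose_mul_mul_sub_smul_gain (hP : P.IsHermitian) (hW : W.IsHermitian)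
    (hK : IsOptimalGain P W A B K) (t : R) :
    (A - t • (B * K))ᴴ * P * (A - t • (B * K)) =
      Aᴴ * P * A - (1 - star (1 - t) * (1 - t)) • (Kᴴ * (W + Bᴴ * P * B) * K) -
        (star t * t) • (Kᴴ * W * K) := by
  have hBK : (B * K)ᴴ * P * (B * K) = Kᴴ * (W + Bᴴ * P * B) * K - Kᴴ * W * K := by
    simp only [conjTranspose_mul, Matrix.mul_add, Matrix.add_mul, Matrix.mul_assoc,
      add_sub_cancel_left]
  simp only [conjTranspose_sub, conjTranspose_smul, Matrix.sub_mul, Matrix.mul_sub,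
    Matrix.smul_mul, Matrix.mul_smul, hK.conjTranspose_mul_mul_mul_gain hP hW,
    hK.gain_conjTranspose_mul_mul, hBK, star_sub, star_one]
  module

theorem sub_conjTranspose_mul_mul_sub_smul_gain {P Q A : Matrix n n R} {B : Matrix n m R}
    {K : Matrix m n R} (hP : P.IsHermitian) (hW : W.IsHermitian) (hK : IsOptimalGain P W A B K)
    (hric : P = Q + Aᴴ * P * A - Kᴴ * (W + Bᴴ * P * B) * K) (t : R) :
    P - (A - t • (B * K))ᴴ * P * (A - t • (B * K)) =
      Q - (star (1 - t) * (1 - t)) • (Kᴴ * (W + Bᴴ * P * B) * K) +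
        (star t * t) • (Kᴴ * W * K) := by
  rw [hK.conjTranspose_mul_mul_sub_smul_gain hP hW, sub_eq_iff_eq_add]
  nth_rw 1 [hric]
  module

theorem map_sub_conjTranspose_mul_mul_sub_smul_gain [CommRing S] [StarRing S] [Algebra R S]
    [StarModule R S] {P Q A : Matrix n n R} {B : Matrix n m R} {K : Matrix m n R}
    (hP : P.IsHermitian) (hW : W.IsHermitian) (hK : IsOptimalGain P W A B K)
    (hric : P = Q + Aᴴ * P * A - Kᴴ * (W + Bᴴ * P * B) * K) (t : S) :
    P.map (algebraMap R S) -
        (A.map (algebraMap R S) - t • (B.map (algebraMap R S) * K.map (algebraMap R S)))ᴴ *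
          P.map (algebraMap R S) *
        (A.map (algebraMap R S) - t • (B.map (algebraMap R S) * K.map (algebraMap R S))) =
      Q.map (algebraMap R S) -
        (star (1 - t) * (1 - t)) • (Kᴴ * (W + Bᴴ * P * B) * K).map (algebraMap R S) +
        (star t * t) • (Kᴴ * W * K).map (algebraMap R S) := by
  have hstar : Function.Semiconj (algebraMap R S) star star := algebraMap_star_comm
  have hric_map := congr_arg (·.map (algebraMap R S)) hric
  simp only [Matrix.map_sub _ (map_sub _), Matrix.map_add _ (map_add _), Matrix.map_mul,
    conjTranspose_map _ hstar] at hric_map ⊢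
  exact hK.map.sub_conjTranspose_mul_mul_sub_smul_gain (hP.map _ hstar) (hW.map _ hstar) hric_map t

end IsOptimalGain

end OptimalGain

theorem conjTranspose_mul_mul_self_of_eq_inv_mul [DecidableEq m] {H : Matrix m m R}
    (hH : H.IsHermitian) (hunit : IsUnit H) {X : Matrix l m R} {K : Matrix m l R}
    (hK : K = H⁻¹ * Xᴴ) : Kᴴ * H * K = X * H⁻¹ * Xᴴ := by
  have hdet : IsUnit H.det := (isUnit_iff_isUnit_det _).1 hunit
  rw [hK, conjTranspose_mul, hH.inv.eq, conjTranspose_conjTranspose,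
    nonsing_inv_mul_cancel_right _ _ hdet, Matrix.mul_assoc]

theorem conjTranspose_mul_self_of_eq_inv_mul [DecidableEq m] {H : Matrix m m R}
    (hH : H.IsHermitian) {X : Matrix l m R} {K : Matrix m l R} (hK : K = H⁻¹ * Xᴴ) :
    Kᴴ * K = X * H⁻¹ ^ 2 * Xᴴ := by
  rw [hK, conjTranspose_mul, hH.inv.eq, conjTranspose_conjTranspose, sq]
  simp only [Matrix.mul_assoc]

theorem smul_conjTranspose_mul_mul_smul [Fintype n] {μ : R} (hμ : IsSelfAdjoint μ)
    (X : Matrix m k R) (P : Matrix m n R) (Y : Matrix n l R) :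
    (μ • X)ᴴ * P * (μ • Y) = μ ^ 2 • (Xᴴ * P * Y) := by
  simp only [conjTranspose_smul, hμ.star_eq, Matrix.smul_mul, Matrix.mul_smul, smul_smul, sq]

theorem star_one_sub_ofReal_mul_mul_self (c : ℝ) (z : ℂ) :
    star (1 - c * z) * (1 - c * z) = ((1 - 2 * c * z.re + c ^ 2 * ‖z‖ ^ 2 : ℝ) : ℂ) := by
  have hre : z + star z = 2 * z.re := by simpa using Complex.add_conj z
  have hnorm : star z * z = (‖z‖ : ℂ) ^ 2 := Complex.conj_mul' z
  have hc : star (c : ℂ) = c := Complex.conj_ofReal c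
  rw [star_sub, star_one, star_mul', hc]
  push_cast
  linear_combination c ^ 2 * hnorm - c * hre

theorem star_ofReal_mul_mul_self_mul_ofReal (a c : ℝ) (z : ℂ) :
    star (c * z) * (c * z) * a = ((c ^ 2 * a * ‖z‖ ^ 2 : ℝ) : ℂ) := by
  have hnorm : star z * z = (‖z‖ : ℂ) ^ 2 := Complex.conj_mul' z
  have hc : star (c : ℂ) = c := Complex.conj_ofReal c
  rw [star_mul', hc]
  push_cast
  linear_combination c ^ 2 * a * hnorm

theorem lyapunov_qfunction_identity_general [Fintype n] [CommRing S] [StarRing S] [Algebra R S]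
    [StarModule R S] [DecidableEq m]
    {A Q P : Matrix n n R} {B : Matrix n m R} {γ μ : R} (hγ : IsSelfAdjoint γ)
    (hμ : IsSelfAdjoint μ) (hP : P.IsHermitian)
    (hric : P = Q + μ ^ 2 • (Aᴴ * P * A) -
      μ ^ 4 • (Aᴴ * P * B *
        (γ • (1 : Matrix m m R) + μ ^ 2 • (Bᴴ * P * B))⁻¹ * (Bᴴ * P * A)))
    {H₁₂ : Matrix n m R} (hH₁₂ : H₁₂ = μ ^ 2 • (Aᴴ * P * B))
    {H₂₂ : Matrix m m R} (hH₂₂ : H₂₂ = γ • (1 : Matrix m m R) + μ ^ 2 • (Bᴴ * P * B))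
    (hunit : IsUnit H₂₂) {K : Matrix m n R} (hK : K = H₂₂⁻¹ * H₁₂ᴴ) (t : S) :
    P.map (algebraMap R S) -
      (algebraMap R S μ • A.map (algebraMap R S) -
        (algebraMap R S μ * t) • (B.map (algebraMap R S) * K.map (algebraMap R S)))ᴴ *
        P.map (algebraMap R S) *
      (algebraMap R S μ • A.map (algebraMap R S) -
        (algebraMap R S μ * t) • (B.map (algebraMap R S) * K.map (algebraMap R S))) =
    Q.map (algebraMap R S) -
      (star (1 - t) * (1 - t)) • (H₁₂ * H₂₂⁻¹ * H₁₂ᴴ).map (algebraMap R S) +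
      (star t * t * algebraMap R S γ) • (H₁₂ * H₂₂⁻¹ ^ 2 * H₁₂ᴴ).map (algebraMap R S) := by
  have hscale_H₂₂ : γ • (1 : Matrix m m R) + (μ • B)ᴴ * P * (μ • B) = H₂₂ := by
    rw [smul_conjTranspose_mul_mul_smul hμ, hH₂₂]
  have hH₁₂_conj : H₁₂ᴴ = μ ^ 2 • (Bᴴ * P * A) := by
    simp only [hH₁₂, conjTranspose_smul, conjTranspose_mul, conjTranspose_conjTranspose, hP.eq,
      (hμ.pow 2).star_eq, Matrix.mul_assoc]
  have hW : (γ • (1 : Matrix m m R)).IsHermitian := isHermitian_one.smul hγ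
  have hH : H₂₂.IsHermitian := hscale_H₂₂ ▸ hW.add (isHermitian_conjTranspose_mul_mul _ hP)
  have hgain : IsOptimalGain P (γ • 1) (μ • A) (μ • B) K := by
    rw [IsOptimalGain, hscale_H₂₂, smul_conjTranspose_mul_mul_smul hμ, ← hH₁₂_conj, hK,
      mul_nonsing_inv_cancel_left _ _ ((isUnit_iff_isUnit_det _).1 hunit)]
  have hS : Kᴴ * H₂₂ * K = H₁₂ * H₂₂⁻¹ * H₁₂ᴴ :=
    conjTranspose_mul_mul_self_of_eq_inv_mul hH hunit hK
  have hT : Kᴴ * (γ • (1 : Matrix m m R)) * K = γ • (H₁₂ * H₂₂⁻¹ ^ 2 * H₁₂ᴴ) := by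
    rw [Matrix.mul_smul, Matrix.mul_one, Matrix.smul_mul,
      conjTranspose_mul_self_of_eq_inv_mul hH hK]
  have hric_gain :
      P = Q + (μ • A)ᴴ * P * (μ • A) - Kᴴ * (γ • 1 + (μ • B)ᴴ * P * (μ • B)) * K := by
    rw [← hH₂₂] at hric
    rw [hscale_H₂₂, hS, smul_conjTranspose_mul_mul_smul hμ, hH₁₂_conj, hH₁₂, Matrix.smul_mul,
      Matrix.smul_mul, Matrix.mul_smul, smul_smul, ← pow_add]
    exact hric
  have key := hgain.map_sub_conjTranspose_mul_mul_sub_smul_gain hP hW hric_gain t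
  rw [hscale_H₂₂, hS, hT] at key
  simp only [Matrix.map_smulₛₗ _ (algebraMap R S) _ (map_mul (algebraMap R S) _), Matrix.smul_mul,
    smul_smul, mul_comm t] at key
  exact key

/-- The key algebraic identity in the proofs of Theorems 4 and 5:
`P − MᴴPM = Q − s·H₁₂H₂₂⁻¹H₁₂ᵀ + c²γ|λ|²·H₁₂H₂₂⁻²H₁₂ᵀ`
with `M = μA − μcλ·BK` and `s = 1 − 2c·Re λ + c²|λ|²`. -/
theorem lyapunov_qfunction_identity (n m : ℕ)
    (A : Matrix (Fin n) (Fin n) ℝ) (B : Matrix (Fin n) (Fin m) ℝ)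
    (Q : Matrix (Fin n) (Fin n) ℝ) (hQ : Q.IsSymm)
    (γ μ : ℝ) (hγ : 0 < γ) (hμ : 1 ≤ μ)
    (P : Matrix (Fin n) (Fin n) ℝ) (hP : P.PosSemidef)
    (hric : P = Q + μ ^ 2 • (Aᵀ * P * A) -
      μ ^ 4 • (Aᵀ * P * B *
        (γ • (1 : Matrix (Fin m) (Fin m) ℝ) + μ ^ 2 • (Bᵀ * P * B))⁻¹ * (Bᵀ * P * A)))
    (H₁₂ : Matrix (Fin n) (Fin m) ℝ) (hH₁₂ : H₁₂ = μ ^ 2 • (Aᵀ * P * B))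
    (H₂₂ : Matrix (Fin m) (Fin m) ℝ)
    (hH₂₂ : H₂₂ = γ • (1 : Matrix (Fin m) (Fin m) ℝ) + μ ^ 2 • (Bᵀ * P * B))
    (K : Matrix (Fin m) (Fin n) ℝ) (hK : K = H₂₂⁻¹ * H₁₂ᵀ)
    (c : ℝ) (lam : ℂ) :
    (P.map (Complex.ofReal ·)) -
      ((μ : ℂ) • A.map (Complex.ofReal ·) -
        ((μ : ℂ) * (c : ℂ) * lam) •
          (B.map (Complex.ofReal ·) * K.map (Complex.ofReal ·)))ᴴ *
        (P.map (Complex.ofReal ·)) *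
      ((μ : ℂ) • A.map (Complex.ofReal ·) -
        ((μ : ℂ) * (c : ℂ) * lam) •
          (B.map (Complex.ofReal ·) * K.map (Complex.ofReal ·))) =
    (Q.map (Complex.ofReal ·)) -
      ((1 - 2 * c * lam.re + c ^ 2 * ‖lam‖ ^ 2 : ℝ) : ℂ) •
        ((H₁₂ * H₂₂⁻¹ * H₁₂ᵀ).map (Complex.ofReal ·)) +
      ((c ^ 2 * γ * ‖lam‖ ^ 2 : ℝ) : ℂ) •
        ((H₁₂ * (H₂₂⁻¹) ^ 2 * H₁₂ᵀ).map (Complex.ofReal ·)) := by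
  have hunit : IsUnit H₂₂ := hH₂₂ ▸ ((PosDef.one.smul hγ).add_posSemidef
    ((hP.conjTranspose_mul_mul_same B).smul (sq_nonneg μ))).isUnit
  rw [← star_one_sub_ofReal_mul_mul_self, ← star_ofReal_mul_mul_self_mul_ofReal,
    mul_assoc (μ : ℂ)]
  -- Over `ℝ`, `ᴴ` unfolds to `ᵀ`, and `algebraMap ℝ ℂ` unfolds to `Complex.ofReal`.
  exact lyapunov_qfunction_identity_general (IsSelfAdjoint.all γ) (IsSelfAdjoint.all μ)
    hP.isHermitian hric hH₁₂ hH₂₂ hunit hK (c * lam)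
end

section
/- Let A ∈ ℝ^{n×n}, B ∈ ℝ^{n×m}, Q ∈ ℝ^{n×n} symmetric, γ > 0, μ ≥ 1, and let P ∈ ℝ^{n×n} be a symmetric positive definite matrix satisfying P = Q + μ²AᵀPA − μ⁴AᵀPB(γI_m + μ²BᵀPB)⁻¹BᵀPA. Define H₁₂ = μ²AᵀPB, H₂₂ = γI_m + μ²BᵀPB, and K = H₂₂⁻¹H₁₂ᵀ. Let c ∈ ℝ, λ ∈ ℂ, β ∈ ℝ, and suppose that Q − β²·H₁₂H₂₂⁻¹H₁₂ᵀ is positive definite and that 1 − 2c·Re λ + c²|λ|² ≤ β². Then the complex matrix A − cλ·BK has spectral radius strictly less than 1/μ. -/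
/-!
Put `H = R + BᴴPB`, so that `HK = BᴴPA` and `W = KᴴHK` is the quadratic term of the Riccati
equation `P = Q + AᴴPA - W`. For `M = A - s • BK`, all terms of `MᴴPM` that involve `s` are
multiples of `W` and `KᴴRK`, and completing the square in `s` gives

  `P - MᴴPM = (Q - |1 - s|² W) + |s|² KᴴRK`.

If `|1 - s|² ≤ β²`, the right-hand side is at least `Q - β² W`, hence positive definite, and
testing this on an eigenvector of `M` bounds the eigenvalue by `1`. The factor `μ` is absorbed by
replacing `A` and `B` with `μA` and `μB`, which replaces `M` with `μM`.
-/

open Matrix Polynomial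

section

open scoped ComplexOrder MatrixOrder Matrix.Norms.L2Operator

variable {𝕜 𝕜' ι κ : Type*} [RCLike 𝕜] [RCLike 𝕜']

theorem map_conjTranspose_starAlgHom (φ : 𝕜 →⋆ₐ[ℝ] 𝕜') {α β : Type*} (N : Matrix α β 𝕜) :
    Nᴴ.map φ = (N.map φ)ᴴ :=
  conjTranspose_map φ (map_star φ)

theorem map_realSMul_starAlgHom (φ : 𝕜 →⋆ₐ[ℝ] 𝕜') {α β : Type*} (r : ℝ) (N : Matrix α β 𝕜) :
    (r • N).map φ = r • N.map φ :=
  Matrix.map_smul φ r (fun a => φ.toAlgHom.toLinearMap.map_smul r a) N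

theorem posSemidef_map_starAlgHom [Finite ι] (φ : 𝕜 →⋆ₐ[ℝ] 𝕜') {N : Matrix ι ι 𝕜}
    (hN : N.PosSemidef) :
    (N.map φ).PosSemidef := by
  classical
  have := Fintype.ofFinite ι
  obtain ⟨C, rfl⟩ := CStarAlgebra.nonneg_iff_eq_star_mul_self.mp hN.nonneg
  rw [star_eq_conjTranspose, Matrix.map_mul, map_conjTranspose_starAlgHom]
  exact posSemidef_conjTranspose_mul_self _

theorem posDef_map_starAlgHom [Finite ι] (φ : 𝕜 →⋆ₐ[ℝ] 𝕜') {N : Matrix ι ι 𝕜} (hN : N.PosDef) :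
    (N.map φ).PosDef := by
  classical
  have := Fintype.ofFinite ι
  exact (posSemidef_map_starAlgHom φ hN.posSemidef).posDef_iff_isUnit.mpr
    (hN.isUnit.map (φ : 𝕜 →+* 𝕜').mapMatrix)

variable [Fintype κ]

theorem conjTranspose_inv_mul_mul_mul [DecidableEq κ] {H : Matrix κ κ 𝕜} (hH : H.IsHermitian)
    (hunit : IsUnit H) (C : Matrix ι κ 𝕜) :
    (H⁻¹ * Cᴴ)ᴴ * H * (H⁻¹ * Cᴴ) = C * H⁻¹ * Cᴴ := by
  rw [conjTranspose_mul, conjTranspose_conjTranspose, hH.inv.eq,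
    nonsing_inv_mul_cancel_right _ _ ((isUnit_iff_isUnit_det _).mp hunit), Matrix.mul_assoc]

variable [Fintype ι]

theorem norm_lt_one_of_posDef_sub_conjTranspose_mul_mul [DecidableEq ι] {P M : Matrix ι ι 𝕜}
    (hP : P.PosSemidef) (hM : (P - Mᴴ * P * M).PosDef) {z : 𝕜} (hz : z ∈ spectrum 𝕜 M) :
    ‖z‖ < 1 := by
  rw [← spectrum_toLin'] at hz
  obtain ⟨v, hv⟩ := (Module.End.HasEigenvalue.of_mem_spectrum hz).exists_hasEigenvector
  have hMv : M *ᵥ v = z • v := hv.apply_eq_smul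
  have hform : star v ⬝ᵥ ((P - Mᴴ * P * M) *ᵥ v) =
      ((1 - ‖z‖ ^ 2 : ℝ) : 𝕜) * (star v ⬝ᵥ (P *ᵥ v)) := by
    have hconj : star v ⬝ᵥ ((Mᴴ * P * M) *ᵥ v) = (star z * z) * (star v ⬝ᵥ (P *ᵥ v)) := by
      rw [← mulVec_mulVec, ← mulVec_mulVec, dotProduct_mulVec, ← star_mulVec, hMv, mulVec_smul,
        star_smul, smul_dotProduct, dotProduct_smul, smul_eq_mul, smul_eq_mul, mul_assoc]
    rw [sub_mulVec, dotProduct_sub, hconj, RCLike.star_def, RCLike.conj_mul]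
    push_cast
    ring
  have hpos := (RCLike.pos_iff.mp (hM.dotProduct_mulVec_pos hv.2)).1
  rw [hform, RCLike.re_ofReal_mul] at hpos
  have hsq := pos_of_mul_pos_left hpos (hP.re_dotProduct_nonneg v)
  exact (sq_lt_one_iff₀ (norm_nonneg z)).mp (by linarith)

theorem conjTranspose_realSMul_mul_mul_realSMul {α β : Type*} (μ : ℝ) (P : Matrix ι ι 𝕜)
    (X : Matrix ι α 𝕜) (Y : Matrix ι β 𝕜) :
    (μ • X)ᴴ * P * (μ • Y) = μ ^ 2 • (Xᴴ * P * Y) := by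
  simp only [conjTranspose_smul, star_trivial, Matrix.smul_mul, Matrix.mul_smul, smul_smul, sq]

/-- `P` solves the discrete-time algebraic Riccati equation of the linear-quadratic regulator with
dynamics `(A, B)` and cost weights `(Q, R)`, and `K` is an associated feedback gain. The usual
inverse of `R + BᴴPB` is eliminated through the normal equation for `K`, so that both equations
are polynomial and pass through ring homomorphisms. -/
structure IsRiccatiSolution (A : Matrix ι ι 𝕜) (B : Matrix ι κ 𝕜) (Q : Matrix ι ι 𝕜)
    (R : Matrix κ κ 𝕜) (P : Matrix ι ι 𝕜) (K : Matrix κ ι 𝕜) : Prop where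
  gain : (R + Bᴴ * P * B) * K = Bᴴ * P * A
  riccati : P = Q + Aᴴ * P * A - Kᴴ * (R + Bᴴ * P * B) * K

namespace IsRiccatiSolution

variable {A Q P : Matrix ι ι 𝕜} {B : Matrix ι κ 𝕜} {R : Matrix κ κ 𝕜} {K : Matrix κ ι 𝕜}

theorem of_inv [DecidableEq κ] {H : Matrix κ κ 𝕜} {C : Matrix ι κ 𝕜} (hH : H = R + Bᴴ * P * B)
    (hC : C = Aᴴ * P * B) (hP : P.IsHermitian) (hR : R.IsHermitian) (hunit : IsUnit H)
    (hric : P = Q + Aᴴ * P * A - C * H⁻¹ * Cᴴ) :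
    IsRiccatiSolution A B Q R P (H⁻¹ * Cᴴ) where
  gain := by
    rw [← hH, mul_nonsing_inv_cancel_left _ _ ((isUnit_iff_isUnit_det _).mp hunit), hC]
    simp only [conjTranspose_mul, conjTranspose_conjTranspose, hP.eq, Matrix.mul_assoc]
  riccati := by
    have hHherm : H.IsHermitian := hH ▸ hR.add (isHermitian_conjTranspose_mul_mul B hP)
    rwa [← hH, conjTranspose_inv_mul_mul_mul hHherm hunit]

theorem map (h : IsRiccatiSolution A B Q R P K) (φ : 𝕜 →⋆ₐ[ℝ] 𝕜') :
    IsRiccatiSolution (A.map φ) (B.map φ) (Q.map φ) (R.map φ) (P.map φ) (K.map φ) where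
  gain := by
    simpa only [Matrix.map_mul, Matrix.map_add φ (map_add φ), map_conjTranspose_starAlgHom]
      using congrArg (Matrix.map · φ) h.gain
  riccati := by
    simpa only [Matrix.map_mul, Matrix.map_add φ (map_add φ), Matrix.map_sub φ (map_sub φ),
      map_conjTranspose_starAlgHom] using congrArg (Matrix.map · φ) h.riccati

theorem sub_closedLoop_eq (h : IsRiccatiSolution A B Q R P K) (hR : R.IsHermitian)
    (hP : P.IsHermitian) (s : 𝕜) :
    P - (A - s • (B * K))ᴴ * P * (A - s • (B * K)) =
      Q - ‖1 - s‖ ^ 2 • (Kᴴ * (R + Bᴴ * P * B) * K) + ‖s‖ ^ 2 • (Kᴴ * R * K) := by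
  set W := Kᴴ * (R + Bᴴ * P * B) * K with hW
  have hKA : Kᴴ * (Bᴴ * (P * A)) = W := by
    rw [hW, Matrix.mul_assoc, h.gain, Matrix.mul_assoc]
  have hAK : Aᴴ * (P * (B * K)) = W := by
    have hWherm : W.IsHermitian := isHermitian_conjTranspose_mul_mul K
      (hR.add (isHermitian_conjTranspose_mul_mul B hP))
    rw [← hWherm.eq, ← hKA]
    simp [conjTranspose_mul, hP.eq, Matrix.mul_assoc]
  have hKK : Kᴴ * (Bᴴ * (P * (B * K))) = W - Kᴴ * (R * K) := by
    simp only [hW, Matrix.mul_add, Matrix.add_mul, Matrix.mul_assoc, add_sub_cancel_left]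
  have hAA : Aᴴ * (P * A) = P - Q + W := by
    rw [← Matrix.mul_assoc]
    nth_rewrite 2 [h.riccati]
    abel
  have hexpand : (A - s • (B * K))ᴴ * P * (A - s • (B * K)) =
      (P - Q + W) - s • W - star s • W + (star s * s) • (W - Kᴴ * R * K) := by
    simp only [conjTranspose_sub, conjTranspose_smul, conjTranspose_mul, Matrix.sub_mul,
      Matrix.mul_sub, Matrix.smul_mul, Matrix.mul_smul, Matrix.mul_assoc]
    rw [hAA, hAK, hKA, hKK]
    module
  have hnormSq (t : 𝕜) (N : Matrix ι ι 𝕜) : ‖t‖ ^ 2 • N = (star t * t) • N := by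
    rw [RCLike.star_def, RCLike.conj_mul, ← RCLike.ofReal_pow,
      RCLike.real_smul_eq_coe_smul (K := 𝕜)]
  rw [hexpand, hnormSq, hnormSq, star_sub, star_one]
  module

theorem posDef_sub_closedLoop (h : IsRiccatiSolution A B Q R P K) (hR : R.PosSemidef)
    (hP : P.PosSemidef) {s : 𝕜} {β : ℝ} (hs : ‖1 - s‖ ^ 2 ≤ β ^ 2)
    (hpos : (Q - β ^ 2 • (Kᴴ * (R + Bᴴ * P * B) * K)).PosDef) :
    (P - (A - s • (B * K))ᴴ * P * (A - s • (B * K))).PosDef := by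
  set W := Kᴴ * (R + Bᴴ * P * B) * K
  have hW : W.PosSemidef :=
    (hR.add (hP.conjTranspose_mul_mul_same B)).conjTranspose_mul_mul_same K
  have hsplit : Q - ‖1 - s‖ ^ 2 • W = (Q - β ^ 2 • W) + (β ^ 2 - ‖1 - s‖ ^ 2) • W := by module
  rw [h.sub_closedLoop_eq hR.isHermitian hP.isHermitian s, hsplit]
  exact (hpos.add_posSemidef (hW.smul (sub_nonneg.mpr hs))).add_posSemidef
    ((hR.conjTranspose_mul_mul_same K).smul (sq_nonneg _))

theorem norm_lt_one_of_mem_spectrum [DecidableEq ι] (h : IsRiccatiSolution A B Q R P K)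
    (φ : 𝕜 →⋆ₐ[ℝ] 𝕜') (hR : R.PosSemidef) (hP : P.PosSemidef) {s : 𝕜'} {β : ℝ}
    (hs : ‖1 - s‖ ^ 2 ≤ β ^ 2) (hpos : (Q - β ^ 2 • (Kᴴ * (R + Bᴴ * P * B) * K)).PosDef)
    {z : 𝕜'} (hz : z ∈ spectrum 𝕜' (A.map φ - s • (B.map φ * K.map φ))) :
    ‖z‖ < 1 := by
  have hposφ := posDef_map_starAlgHom φ hpos
  simp only [Matrix.map_mul, Matrix.map_add φ (map_add φ), Matrix.map_sub φ (map_sub φ),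
    map_realSMul_starAlgHom, map_conjTranspose_starAlgHom] at hposφ
  exact norm_lt_one_of_posDef_sub_conjTranspose_mul_mul (posSemidef_map_starAlgHom φ hP)
    ((h.map φ).posDef_sub_closedLoop (posSemidef_map_starAlgHom φ hR)
      (posSemidef_map_starAlgHom φ hP) hs hposφ) hz

end IsRiccatiSolution

/-- The homomorphism `φ` serves to treat real and complex coefficient matrices at once. -/
theorem spectral_radius_lt_inv_mu_general [DecidableEq ι] [DecidableEq κ] (φ : 𝕜 →⋆ₐ[ℝ] ℂ)
    {A Q P : Matrix ι ι 𝕜} {B : Matrix ι κ 𝕜} {R H₂₂ : Matrix κ κ 𝕜} {H₁₂ : Matrix ι κ 𝕜}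
    {K : Matrix κ ι 𝕜} {μ : ℝ} (hμ : 0 < μ) (hP : P.PosSemidef) (hR : R.PosSemidef)
    (hric : P = Q + μ ^ 2 • (Aᴴ * P * A) -
      μ ^ 4 • (Aᴴ * P * B * (R + μ ^ 2 • (Bᴴ * P * B))⁻¹ * (Bᴴ * P * A)))
    (hH₁₂ : H₁₂ = μ ^ 2 • (Aᴴ * P * B)) (hH₂₂ : H₂₂ = R + μ ^ 2 • (Bᴴ * P * B))
    (hunit : IsUnit H₂₂) (hK : K = H₂₂⁻¹ * H₁₂ᴴ) {s : ℂ} {β : ℝ}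
    (hpos : (Q - β ^ 2 • (H₁₂ * H₂₂⁻¹ * H₁₂ᴴ)).PosDef) (hs : ‖1 - s‖ ^ 2 ≤ β ^ 2) {z : ℂ}
    (hz : (A.map φ - s • (B.map φ * K.map φ)).charpoly.IsRoot z) :
    ‖z‖ < 1 / μ := by
  have hH : H₂₂ = R + (μ • B)ᴴ * P * (μ • B) := by
    rw [hH₂₂, conjTranspose_realSMul_mul_mul_realSMul]
  have hC : H₁₂ = (μ • A)ᴴ * P * (μ • B) := by
    rw [hH₁₂, conjTranspose_realSMul_mul_mul_realSMul]
  have hHherm : H₂₂.IsHermitian :=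
    hH ▸ hR.isHermitian.add (isHermitian_conjTranspose_mul_mul _ hP.isHermitian)
  have hric' : P = Q + (μ • A)ᴴ * P * (μ • A) - H₁₂ * H₂₂⁻¹ * H₁₂ᴴ := by
    rw [conjTranspose_realSMul_mul_mul_realSMul, hH₁₂]
    simpa [hH₂₂, hP.isHermitian.eq, Matrix.mul_assoc, smul_smul, ← pow_add] using hric
  have hsol : IsRiccatiSolution (μ • A) (μ • B) Q R P K :=
    hK ▸ .of_inv hH hC hP.isHermitian hR.isHermitian hunit hric'
  rw [← conjTranspose_inv_mul_mul_mul hHherm hunit, ← hK, hH] at hpos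
  have hμz : μ • z ∈ spectrum ℂ ((μ • A).map φ - s • ((μ • B).map φ * K.map φ)) := by
    rw [map_realSMul_starAlgHom, map_realSMul_starAlgHom, Matrix.smul_mul, smul_comm s μ,
      ← smul_sub]
    exact (spectrum.smul_mem_smul_iff (r := Units.mk0 (μ : ℂ) (by exact_mod_cast hμ.ne'))).mpr
      (mem_spectrum_of_isRoot_charpoly hz)
  have hlt := hsol.norm_lt_one_of_mem_spectrum φ hR hP hs hpos hμz
  rwa [norm_smul, Real.norm_of_nonneg hμ.le, ← lt_div_iff₀' hμ] at hlt

end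

theorem norm_one_sub_ofReal_mul_sq (c : ℝ) (w : ℂ) :
    ‖1 - (c : ℂ) * w‖ ^ 2 = 1 - 2 * c * w.re + c ^ 2 * ‖w‖ ^ 2 := by
  simp only [← Complex.normSq_eq_norm_sq, Complex.normSq_apply, Complex.sub_re, Complex.sub_im,
    Complex.one_re, Complex.one_im, Complex.re_ofReal_mul, Complex.im_ofReal_mul]
  ring

/-- Spectral-radius conclusion from the proof of Theorem 4: if
`Q − β²·H₁₂H₂₂⁻¹H₁₂ᵀ ≻ 0` and `1 − 2c·Re λ + c²|λ|² ≤ β²`, then the spectral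
radius of `A − cλ·BK` is strictly less than `1/μ`. -/
theorem spectral_radius_lt_inv_mu (n m : ℕ)
    (A : Matrix (Fin n) (Fin n) ℝ) (B : Matrix (Fin n) (Fin m) ℝ)
    (Q : Matrix (Fin n) (Fin n) ℝ) (hQ : Q.IsSymm)
    (γ μ : ℝ) (hγ : 0 < γ) (hμ : 1 ≤ μ)
    (P : Matrix (Fin n) (Fin n) ℝ) (hP : P.PosDef)
    (hric : P = Q + μ ^ 2 • (Aᵀ * P * A) -
      μ ^ 4 • (Aᵀ * P * B *
        (γ • (1 : Matrix (Fin m) (Fin m) ℝ) + μ ^ 2 • (Bᵀ * P * B))⁻¹ * (Bᵀ * P * A)))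
    (H₁₂ : Matrix (Fin n) (Fin m) ℝ) (hH₁₂ : H₁₂ = μ ^ 2 • (Aᵀ * P * B))
    (H₂₂ : Matrix (Fin m) (Fin m) ℝ)
    (hH₂₂ : H₂₂ = γ • (1 : Matrix (Fin m) (Fin m) ℝ) + μ ^ 2 • (Bᵀ * P * B))
    (K : Matrix (Fin m) (Fin n) ℝ) (hK : K = H₂₂⁻¹ * H₁₂ᵀ)
    (c : ℝ) (lam : ℂ) (β : ℝ)
    (hpos : (Q - β ^ 2 • (H₁₂ * H₂₂⁻¹ * H₁₂ᵀ)).PosDef)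
    (hβ : 1 - 2 * c * lam.re + c ^ 2 * ‖lam‖ ^ 2 ≤ β ^ 2) :
    ∀ z : ℂ,
      ((A.map (Complex.ofReal ·) - ((c : ℂ) * lam) •
          (B.map (Complex.ofReal ·) * K.map (Complex.ofReal ·))).charpoly).IsRoot z →
      ‖z‖ < 1 / μ := by
  simp only [← norm_one_sub_ofReal_mul_sq, ← conjTranspose_eq_transpose_of_trivial]
    at hric hH₁₂ hH₂₂ hK hpos hβ
  have hR : (γ • (1 : Matrix (Fin m) (Fin m) ℝ)).PosDef := .smul .one hγ
  have hH₂₂pos : H₂₂.PosDef := hH₂₂ ▸ hR.add_posSemidef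
    ((hP.posSemidef.conjTranspose_mul_mul_same B).smul (sq_nonneg μ))
  exact fun _ => spectral_radius_lt_inv_mu_general (StarAlgHom.ofId ℝ ℂ) (by linarith)
    hP.posSemidef hR.posSemidef hric hH₁₂ hH₂₂ hH₂₂pos.isUnit hK hpos hβ
end

section
/- Let M be a complex n×n matrix and P a complex Hermitian positive definite n×n matrix such that P − Mᴴ P M is positive definite. Then the spectral radius of M is strictly less than 1, i.e., every eigenvalue z ∈ ℂ of M satisfies |z| < 1. -/
open Matrix Polynomial ComplexOrder

/-! If `M v = z v`, then `vᴴ (P - Mᴴ P M) v = (1 - |z|²) vᴴ P v`. The left side is positive when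
`v ≠ 0` and `vᴴ P v` is nonnegative, so `1 - |z|²` must be positive. -/

theorem star_dotProduct_conjTranspose_mul_mul_mulVec {k l m n R : Type*} [Fintype k] [Fintype l]
    [Fintype m] [Fintype n] [NonUnitalSemiring R] [StarRing R] (A : Matrix k m R)
    (P : Matrix k l R) (B : Matrix l n R) (v : m → R) (w : n → R) :
    star v ⬝ᵥ ((Aᴴ * P * B) *ᵥ w) = star (A *ᵥ v) ⬝ᵥ (P *ᵥ (B *ᵥ w)) := by
  rw [← mulVec_mulVec, ← mulVec_mulVec, dotProduct_mulVec, ← star_mulVec]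

theorem star_dotProduct_sub_conjTranspose_mul_mul_mulVec_of_mulVec_eq_smul {n R : Type*}
    [Fintype n] [CommRing R] [StarRing R] {M : Matrix n n R} (P : Matrix n n R) {z : R}
    {v : n → R} (hv : M *ᵥ v = z • v) :
    star v ⬝ᵥ ((P - Mᴴ * P * M) *ᵥ v) = (1 - star z * z) * (star v ⬝ᵥ (P *ᵥ v)) := by
  have hMPM : star v ⬝ᵥ ((Mᴴ * P * M) *ᵥ v) = star z * z * (star v ⬝ᵥ (P *ᵥ v)) := by
    rw [star_dotProduct_conjTranspose_mul_mul_mulVec, hv, star_smul, mulVec_smul,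
      smul_dotProduct, dotProduct_smul, smul_eq_mul, smul_eq_mul, mul_assoc]
  rw [sub_mulVec, dotProduct_sub, hMPM, sub_mul, one_mul]

theorem exists_mulVec_eq_smul_of_mem_spectrum {n K : Type*} [Fintype n] [DecidableEq n] [Field K]
    {A : Matrix n n K} {μ : K} (hμ : μ ∈ spectrum K A) : ∃ v ≠ 0, A *ᵥ v = μ • v := by
  rw [← spectrum_toLin', ← Module.End.hasEigenvalue_iff_mem_spectrum] at hμ
  obtain ⟨v, hv⟩ := hμ.exists_hasEigenvector
  exact ⟨v, hv.2, hv.apply_eq_smul⟩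

section RCLike

variable {n 𝕜 : Type*} [Fintype n] [RCLike 𝕜] {M P : Matrix n n 𝕜} {z : 𝕜}

theorem norm_lt_one_of_mulVec_eq_smul {v : n → 𝕜} (hv : M *ᵥ v = z • v)
    (hP : 0 ≤ star v ⬝ᵥ (P *ᵥ v)) (hLyap : 0 < star v ⬝ᵥ ((P - Mᴴ * P * M) *ᵥ v)) :
    ‖z‖ < 1 := by
  rw [star_dotProduct_sub_conjTranspose_mul_mul_mulVec_of_mulVec_eq_smul P hv] at hLyap
  have hz : (0 : 𝕜) < ((1 - ‖z‖ ^ 2 : ℝ) : 𝕜) := by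
    simpa [RCLike.star_def, RCLike.conj_mul] using pos_of_mul_pos_left hLyap hP
  rw [RCLike.ofReal_pos, sub_pos] at hz
  exact (sq_lt_one_iff₀ (norm_nonneg z)).mp hz

theorem lyapunov_schur_stability_general [DecidableEq n] (hP : P.PosSemidef)
    (hLyap : (P - Mᴴ * P * M).PosDef) (hz : z ∈ spectrum 𝕜 M) : ‖z‖ < 1 := by
  obtain ⟨v, hv, hMv⟩ := exists_mulVec_eq_smul_of_mem_spectrum hz
  exact norm_lt_one_of_mulVec_eq_smul hMv (hP.dotProduct_mulVec_nonneg v)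
    (hLyap.dotProduct_mulVec_pos hv)

end RCLike

/-- Discrete-time Lyapunov stability: if `P ≻ 0` is Hermitian and
`P − MᴴPM ≻ 0`, then every eigenvalue of `M` has modulus `< 1`. -/
theorem lyapunov_schur_stability (n : ℕ)
    (M P : Matrix (Fin n) (Fin n) ℂ) (hP : P.PosDef)
    (hLyap : (P - Mᴴ * P * M).PosDef) :
    ∀ z : ℂ, (M.charpoly).IsRoot z → ‖z‖ < 1 :=
  fun _ hz ↦ lyapunov_schur_stability_general hP.posSemidef hLyap
    (mem_spectrum_of_isRoot_charpoly hz)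
end

section
/- Let A ∈ ℝ^{n×n}, B ∈ ℝ^{n×m}, Q ∈ ℝ^{n×n} symmetric positive semidefinite, γ > 0, μ ≥ 1, and let H be a symmetric (n+m)×(n+m) real matrix with blocks H₁₁ ∈ ℝ^{n×n}, H₁₂ ∈ ℝ^{n×m}, H₂₂ ∈ ℝ^{m×m}, where H₂₂ is positive definite. Let G = [A B] denote the n×(n+m) matrix formed by placing A and B side by side, let Λ be the block-diagonal (n+m)×(n+m) matrix with blocks Q and γI_m, let D be a real (n+m)×l matrix with rank(D) = n+m, and set X = GD. Then the block matrix [[ μ²GᵀH₁₁G − H + Λ, μGᵀH₁₂ ],[ μH₁₂ᵀG, H₂₂ ]] is positive semidefinite if and only if the block matrix [[ μ²XᵀH₁₁X − Dᵀ(H − Λ)D, μXᵀH₁₂ ],[ μH₁₂ᵀX, H₂₂ ]] is positive semidefinite. -/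
open Matrix

/-!
The data-driven matrix is `Tᴴ M T`, where `M` is the model-based one and `T = diag(D, 1)`. Full row
rank gives `D`, and hence `T`, a right inverse `S`, so `M = Sᴴ (Tᴴ M T) S` is in turn a congruence
transform of the data-driven matrix.
-/

section Congruence

variable {R : Type*} [Ring R] [PartialOrder R] [StarRing R]
variable {m n p : Type*} [Fintype m] [DecidableEq m] [Fintype n]

theorem posSemidef_conjTranspose_mul_mul_iff_of_mul_eq_one {T : Matrix m n R} {S : Matrix n m R}
    (hTS : T * S = 1) {M : Matrix m m R} : (Tᴴ * M * T).PosSemidef ↔ M.PosSemidef := by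
  refine ⟨fun h ↦ ?_, fun h ↦ h.conjTranspose_mul_mul_same T⟩
  have hM : Sᴴ * (Tᴴ * M * T) * S = M := calc
    Sᴴ * (Tᴴ * M * T) * S = (T * S)ᴴ * M * (T * S) := by
      simp only [conjTranspose_mul, Matrix.mul_assoc]
    _ = M := by rw [hTS, conjTranspose_one, Matrix.one_mul, Matrix.mul_one]
  exact hM ▸ h.conjTranspose_mul_mul_same S

theorem posSemidef_fromBlocks_conjTranspose_mul_mul_iff_of_mul_eq_one [Finite p]
    {D : Matrix m n R} {E : Matrix n m R} (hDE : D * E = 1)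
    (P : Matrix m m R) (U : Matrix m p R) (V : Matrix p m R) (W : Matrix p p R) :
    (fromBlocks (Dᴴ * P * D) (Dᴴ * U) (V * D) W).PosSemidef ↔
      (fromBlocks P U V W).PosSemidef := by
  classical
  have := Fintype.ofFinite p
  have hTS : fromBlocks D 0 0 (1 : Matrix p p R) * fromBlocks E 0 0 (1 : Matrix p p R) = 1 := by
    simp [fromBlocks_multiply, hDE]
  rw [← posSemidef_conjTranspose_mul_mul_iff_of_mul_eq_one hTS]
  simp [fromBlocks_conjTranspose, fromBlocks_multiply]

end Congruence

section FullRowRank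

variable {K : Type*} [Field K] {m n : Type*} [Fintype m] [DecidableEq m] [Fintype n]

theorem exists_mul_eq_one_of_rank_eq_card_s14 {D : Matrix m n K} (hD : D.rank = Fintype.card m) :
    ∃ E : Matrix n m K, D * E = 1 := by
  rw [← mulVec_surjective_iff_exists_right_inverse]
  have hrange : D.mulVecLin.range = ⊤ :=
    Submodule.eq_top_of_finrank_eq (hD.trans (Module.finrank_fintype_fun_eq_card K).symm)
  exact LinearMap.range_eq_top.mp hrange

end FullRowRank

theorem model_based_iff_data_driven_lmi_general {K : Type*} [Field K] [PartialOrder K] [StarRing K]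
    {n m p l : Type*} [Fintype n] [Finite m] [Fintype p] [Fintype l]
    (G : Matrix n p K) (H Λ : Matrix p p K) (μ : K)
    (H₁₁ : Matrix n n K) (H₁₂ : Matrix n m K) (H₂₁ : Matrix m n K) (H₂₂ : Matrix m m K)
    (D : Matrix p l K) (hD : D.rank = Fintype.card p) :
    (fromBlocks (μ ^ 2 • (Gᴴ * H₁₁ * G) - H + Λ) (μ • (Gᴴ * H₁₂))
        (μ • (H₂₁ * G)) H₂₂).PosSemidef ↔
      (fromBlocks (μ ^ 2 • ((G * D)ᴴ * H₁₁ * (G * D)) - Dᴴ * (H - Λ) * D) (μ • ((G * D)ᴴ * H₁₂))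
        (μ • (H₂₁ * (G * D))) H₂₂).PosSemidef := by
  classical
  obtain ⟨E, hDE⟩ := exists_mul_eq_one_of_rank_eq_card_s14 hD
  have hdiag : Dᴴ * (μ ^ 2 • (Gᴴ * H₁₁ * G) - H + Λ) * D =
      μ ^ 2 • ((G * D)ᴴ * H₁₁ * (G * D)) - Dᴴ * (H - Λ) * D := by
    simp only [sub_add, conjTranspose_mul, Matrix.mul_sub, Matrix.sub_mul,
      Matrix.mul_smul, Matrix.smul_mul, Matrix.mul_assoc]
  have hupper : Dᴴ * (μ • (Gᴴ * H₁₂)) = μ • ((G * D)ᴴ * H₁₂) := by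
    rw [Matrix.mul_smul, conjTranspose_mul, Matrix.mul_assoc]
  have hlower : μ • (H₂₁ * G) * D = μ • (H₂₁ * (G * D)) := by
    rw [Matrix.smul_mul, Matrix.mul_assoc]
  rw [← hdiag, ← hupper, ← hlower,
    posSemidef_fromBlocks_conjTranspose_mul_mul_iff_of_mul_eq_one hDE]

/-- Theorem 6 (equivalence of model-based and data-driven LMIs): with `G = [A B]`,
`Λ = diag(Q, γI)`, `D` of full row rank and `X = GD`, the model-based block LMI
is positive semidefinite iff the data-based block LMI is. -/
theorem model_based_iff_data_driven_lmi (n m l : ℕ)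
    (A : Matrix (Fin n) (Fin n) ℝ) (B : Matrix (Fin n) (Fin m) ℝ)
    (Q : Matrix (Fin n) (Fin n) ℝ) (hQ : Q.PosSemidef)
    (γ μ : ℝ) (hγ : 0 < γ) (hμ : 1 ≤ μ)
    (H₁₁ : Matrix (Fin n) (Fin n) ℝ) (hH₁₁ : H₁₁.IsSymm)
    (H₁₂ : Matrix (Fin n) (Fin m) ℝ)
    (H₂₂ : Matrix (Fin m) (Fin m) ℝ) (hH₂₂ : H₂₂.PosDef)
    (D : Matrix (Fin n ⊕ Fin m) (Fin l) ℝ) (hD : D.rank = n + m) :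
    (Matrix.fromBlocks
        (μ ^ 2 • ((Matrix.fromCols A B)ᵀ * H₁₁ * Matrix.fromCols A B) -
          Matrix.fromBlocks H₁₁ H₁₂ H₁₂ᵀ H₂₂ +
          Matrix.fromBlocks Q 0 0 (γ • (1 : Matrix (Fin m) (Fin m) ℝ)))
        (μ • ((Matrix.fromCols A B)ᵀ * H₁₂))
        (μ • (H₁₂ᵀ * Matrix.fromCols A B)) H₂₂).PosSemidef ↔
      (Matrix.fromBlocks
        (μ ^ 2 • ((Matrix.fromCols A B * D)ᵀ * H₁₁ * (Matrix.fromCols A B * D)) -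
          Dᵀ * (Matrix.fromBlocks H₁₁ H₁₂ H₁₂ᵀ H₂₂ -
            Matrix.fromBlocks Q 0 0 (γ • (1 : Matrix (Fin m) (Fin m) ℝ))) * D)
        (μ • ((Matrix.fromCols A B * D)ᵀ * H₁₂))
        (μ • (H₁₂ᵀ * (Matrix.fromCols A B * D))) H₂₂).PosSemidef := by
  simpa only [conjTranspose_eq_transpose_of_trivial] using
    model_based_iff_data_driven_lmi_general (fromCols A B) (fromBlocks H₁₁ H₁₂ H₁₂ᵀ H₂₂)
      (fromBlocks Q 0 0 (γ • 1)) μ H₁₁ H₁₂ H₁₂ᵀ H₂₂ D (by simpa using hD)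
end

section
/- Let A ∈ ℝ^{n×n}, B ∈ ℝ^{n×m}, Q ∈ ℝ^{n×n} symmetric. For γ > 0 and a symmetric positive semidefinite matrix P ∈ ℝ^{n×n}, define the Riccati operator R_γ(P) = AᵀPA − AᵀPB(γI_m + BᵀPB)⁻¹BᵀPA + Q. If 0 < γ₁ ≤ γ₂ and P₁, P₂ are symmetric positive semidefinite with P₁ ⪯ P₂, then R_{γ₁}(P₁) ⪯ R_{γ₂}(P₂). -/
open Matrix

/-! Up to the additive term `Q`, the Riccati operator is the Schur complement of the top left block
in the matrix of the quadratic form `(u, x) ↦ uᴴRu + (Ax + Bu)ᴴP(Ax + Bu)`, which is monotone in `R`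
and `P`. Schur complements are monotone because, for positive definite `S`, `D - Tᴴ S⁻¹ T` is the
greatest `X` such that `[S T; Tᴴ (D - X)]` is positive semidefinite. -/

section RiccatiCost

variable {α m n p : Type*} [Ring α] [StarRing α]

theorem posSemidef_fromBlocks_zero [PartialOrder α] [Finite m] [Finite p] {M : Matrix m m α}
    (hM : M.PosSemidef) : (fromBlocks M 0 0 0 : Matrix (m ⊕ p) (m ⊕ p) α).PosSemidef := by
  classical
  have := Fintype.ofFinite m
  have h := hM.conjTranspose_mul_mul_same (fromCols (1 : Matrix m m α) (0 : Matrix m p α))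
  rw [conjTranspose_fromCols_eq_fromRows_conjTranspose, fromRows_mul, fromRows_mul_fromCols] at h
  simpa only [conjTranspose_one, conjTranspose_zero, Matrix.one_mul, Matrix.mul_one,
    Matrix.zero_mul, Matrix.mul_zero] using h

variable [Fintype n]

/-- The matrix of the quadratic form `(u, x) ↦ uᴴRu + (Ax + Bu)ᴴP(Ax + Bu)`, the cost of
applying the control `u` in the state `x`, with control weight `R` and terminal weight `P`. The
control variables form the first block. -/
def riccatiCost (A : Matrix n p α) (B : Matrix n m α) (R : Matrix m m α) (P : Matrix n n α) :
    Matrix (m ⊕ p) (m ⊕ p) α :=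
  fromBlocks (R + Bᴴ * P * B) (Bᴴ * P * A) (Aᴴ * P * B) (Aᴴ * P * A)

theorem riccatiCost_eq (A : Matrix n p α) (B : Matrix n m α) (R : Matrix m m α)
    (P : Matrix n n α) :
    riccatiCost A B R P = fromBlocks R 0 0 0 + (fromCols B A)ᴴ * P * fromCols B A := by
  rw [conjTranspose_fromCols_eq_fromRows_conjTranspose, fromRows_mul, fromRows_mul_fromCols,
    fromBlocks_add, zero_add, zero_add, zero_add, riccatiCost]

theorem posSemidef_riccatiCost_sub [PartialOrder α] [StarOrderedRing α] [Finite m] [Finite p]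
    (A : Matrix n p α) (B : Matrix n m α) {R₁ R₂ : Matrix m m α} {P₁ P₂ : Matrix n n α}
    (hR : (R₂ - R₁).PosSemidef) (hP : (P₂ - P₁).PosSemidef) :
    (riccatiCost A B R₂ P₂ - riccatiCost A B R₁ P₁).PosSemidef := by
  have hblock : (fromBlocks R₂ 0 0 0 - fromBlocks R₁ 0 0 0 :
      Matrix (m ⊕ p) (m ⊕ p) α) = fromBlocks (R₂ - R₁) 0 0 0 := by
    simp only [sub_eq_add_neg, fromBlocks_neg, fromBlocks_add, neg_zero, add_zero]
  rw [riccatiCost_eq, riccatiCost_eq, add_sub_add_comm, hblock, ← Matrix.sub_mul, ← Matrix.mul_sub]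
  exact (posSemidef_fromBlocks_zero hR).add (hP.conjTranspose_mul_mul_same _)

end RiccatiCost

section Riccati

variable {𝕜 m n p : Type*} [Field 𝕜] [StarRing 𝕜] [Fintype m] [DecidableEq m]

theorem posSemidef_schurComplement_sub [PartialOrder 𝕜] [StarOrderedRing 𝕜] [Finite p]
    {S₁ S₂ : Matrix m m 𝕜} {T₁ T₂ : Matrix m p 𝕜} {D₁ D₂ : Matrix p p 𝕜} (hS₁ : S₁.PosDef)
    (hle : (fromBlocks S₂ T₂ T₂ᴴ D₂ - fromBlocks S₁ T₁ T₁ᴴ D₁).PosSemidef) :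
    ((D₂ - T₂ᴴ * S₂⁻¹ * T₂) - (D₁ - T₁ᴴ * S₁⁻¹ * T₁)).PosSemidef := by
  have hS₂ : S₂.PosDef := by
    have hS : (S₂ - S₁).PosSemidef := hle.submatrix Sum.inl
    simpa only [add_sub_cancel] using hS₁.add_posSemidef hS
  let := hS₁.isUnit.invertible
  let := hS₂.isUnit.invertible
  set X := D₁ - T₁ᴴ * S₁⁻¹ * T₁ with hX
  have h₁ : (fromBlocks S₁ T₁ T₁ᴴ (D₁ - X)).PosSemidef := by
    rw [PosDef.fromBlocks₁₁ _ _ hS₁, sub_right_comm, ← hX, sub_self]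
    exact .zero
  have h₂ : (fromBlocks S₂ T₂ T₂ᴴ (D₂ - X)).PosSemidef := by
    convert h₁.add hle using 1
    simp only [sub_eq_add_neg, fromBlocks_neg, fromBlocks_add]
    congr 1 <;> abel
  rwa [PosDef.fromBlocks₁₁ _ _ hS₂, sub_right_comm] at h₂

variable [Fintype n]

/-- The Riccati operator `P ↦ AᴴPA - AᴴPB(R + BᴴPB)⁻¹BᴴPA + Q` with control weight `R`, which is
`γ • 1` in `riccati_operator_monotone`. The matrix inverse is `0` when `R + BᴴPB` is singular. -/
noncomputable def riccatiOperator (A : Matrix n p 𝕜) (B : Matrix n m 𝕜) (Q : Matrix p p 𝕜)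
    (R : Matrix m m 𝕜) (P : Matrix n n 𝕜) : Matrix p p 𝕜 :=
  Aᴴ * P * A - Aᴴ * P * B * (R + Bᴴ * P * B)⁻¹ * Bᴴ * P * A + Q

theorem riccati_operator_monotone_general [PartialOrder 𝕜] [StarOrderedRing 𝕜] [Finite p]
    (A : Matrix n p 𝕜) (B : Matrix n m 𝕜) (Q : Matrix p p 𝕜) {R₁ R₂ : Matrix m m 𝕜}
    {P₁ P₂ : Matrix n n 𝕜} (hP₁ : P₁.IsHermitian) (hS₁ : (R₁ + Bᴴ * P₁ * B).PosDef)
    (hR : (R₂ - R₁).PosSemidef) (hP : (P₂ - P₁).PosSemidef) :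
    (riccatiOperator A B Q R₂ P₂ - riccatiOperator A B Q R₁ P₁).PosSemidef := by
  have hP₂ : P₂.IsHermitian := by simpa only [sub_add_cancel] using hP.isHermitian.add hP₁
  have cross_adjoint {P : Matrix n n 𝕜} (h : P.IsHermitian) : (Bᴴ * P * A)ᴴ = Aᴴ * P * B := by
    simp only [conjTranspose_mul, conjTranspose_conjTranspose, h.eq, Matrix.mul_assoc]
  have hcost := posSemidef_riccatiCost_sub A B hR hP
  simp only [riccatiCost, ← cross_adjoint hP₁, ← cross_adjoint hP₂] at hcost
  have hschur := posSemidef_schurComplement_sub hS₁ hcost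
  rw [cross_adjoint hP₁, cross_adjoint hP₂] at hschur
  simpa only [riccatiOperator, add_sub_add_right_eq_sub, Matrix.mul_assoc] using hschur

end Riccati

/-- Monotonicity of the Riccati operator
`R_γ(P) = AᵀPA − AᵀPB(γI + BᵀPB)⁻¹BᵀPA + Q` in both `γ` and `P`. -/
theorem riccati_operator_monotone (n m : ℕ)
    (A : Matrix (Fin n) (Fin n) ℝ) (B : Matrix (Fin n) (Fin m) ℝ)
    (Q : Matrix (Fin n) (Fin n) ℝ) (hQ : Q.IsSymm)
    (γ₁ γ₂ : ℝ) (hγ₁ : 0 < γ₁) (hγ : γ₁ ≤ γ₂)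
    (P₁ P₂ : Matrix (Fin n) (Fin n) ℝ)
    (hP₁ : P₁.PosSemidef) (hP₂ : P₂.PosSemidef)
    (hle : (P₂ - P₁).PosSemidef) :
    ((Aᵀ * P₂ * A -
        Aᵀ * P₂ * B * (γ₂ • (1 : Matrix (Fin m) (Fin m) ℝ) + Bᵀ * P₂ * B)⁻¹ * Bᵀ * P₂ * A + Q) -
      (Aᵀ * P₁ * A -
        Aᵀ * P₁ * B * (γ₁ • (1 : Matrix (Fin m) (Fin m) ℝ) + Bᵀ * P₁ * B)⁻¹ * Bᵀ * P₁ * A + Q)).PosSemidef := by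
  have hS₁ := (PosDef.one.smul hγ₁).add_posSemidef (hP₁.conjTranspose_mul_mul_same B)
  have hR := sub_smul γ₂ γ₁ (1 : Matrix (Fin m) (Fin m) ℝ) ▸ PosSemidef.one.smul (sub_nonneg.2 hγ)
  exact riccati_operator_monotone_general A B Q hP₁.isHermitian hS₁ hR hle
end
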